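/- arXiv:1405.4688 — 2 statements merged into one kernel-verified Lean document; each statement's English description precedes it below -/
import Mathlib

section
/- Let 0 < p ≤ 1. Define F₂(A, B) = (1/p) ∫₀¹ [B^{1/2}(λ(B^{-1/2}AB^{-1/2})^p + (1-λ)I)^{1/p}B^{1/2}]^{1-p} dλ on pairs of n×n positive definite complex matrices. Then F₂ is jointly concave (in the Loewner order), and for positive real scalars s ≠ t (i.e., 1×1 matrices) F₂(s, t) = (s − t)/(s^p − t^p), while F₂(t, t) = (1/p)t^{1-p}. -/
open Matrix MeasureTheory
open scoped ComplexOrder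

attribute [local instance] Matrix.normedAddCommGroup Matrix.normedSpace

/-- Matrix power by a real exponent via the functional calculus
(unitary diagonalization for Hermitian matrices; junk value otherwise). -/
noncomputable def mpow {n : ℕ} (A : Matrix (Fin n) (Fin n) ℂ) (q : ℝ) :
    Matrix (Fin n) (Fin n) ℂ :=
  if hA : A.IsHermitian then
    (hA.eigenvectorUnitary : Matrix (Fin n) (Fin n) ℂ) *
      Matrix.diagonal (fun i => ((hA.eigenvalues i ^ q : ℝ) : ℂ)) *
      (star (hA.eigenvectorUnitary : Matrix (Fin n) (Fin n) ℂ))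
  else 0

/-- The perspective map
`(A,B) ↦ B^{1/2}(λ(B^{-1/2}AB^{-1/2})^p + (1-λ)I)^{1/p}B^{1/2}`. -/
noncomputable def persp2 {n : ℕ} (lam p : ℝ) (A B : Matrix (Fin n) (Fin n) ℂ) :
    Matrix (Fin n) (Fin n) ℂ :=
  mpow B (1 / 2) *
    mpow (lam • mpow (mpow B (-(1 / 2)) * A * mpow B (-(1 / 2))) p + (1 - lam) • 1)
      (1 / p) *
    mpow B (1 / 2)

/-- `F₂(A,B) = (1/p) ∫₀¹ [B^{1/2}(λ(B^{-1/2}AB^{-1/2})^p + (1-λ)I)^{1/p}B^{1/2}]^{1-p} dλ`. -/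
noncomputable def F2map {n : ℕ} (p : ℝ) (A B : Matrix (Fin n) (Fin n) ℂ) :
    Matrix (Fin n) (Fin n) ℂ :=
  (1 / p) • ∫ l in Set.Icc (0 : ℝ) 1, mpow (persp2 l p A B) (1 - p)

/-!
The proof takes place in an arbitrary unital C⋆-algebra. Write `a # b` for
`a^{1/2} (a^{-1/2} b a^{-1/2})^p a^{1/2}`. The operator form of Jensen's inequality for `t ↦ t ^ p`,
which the integral representation of the power reduces to the inverse, makes `#` jointly concave,
monotone in `a` and covariant under congruence by invertible elements.

The map `x ↦ λ (x # a) + (1 - λ) (x # b)` is homogeneous of degree `1 - p`, fixes the power mean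
`G = b^{1/2} (λ (b^{-1/2} a b^{-1/2})^p + 1 - λ)^{1/p} b^{1/2}`, and is monotone. Hence if its value
at `x` is at least `x`, then `x ≤ c G` implies `x ≤ c^{1-p} G`, and iterating gives `x ≤ G`: the
power mean is the largest subsolution. A convex combination of power means is a subsolution for the
convex combination of the arguments by joint concavity of `#`, so the power mean is jointly concave.
Concavity survives composition with the operator monotone and operator concave `t ↦ t^{1-p}` and
integration over `λ`.
-/

open scoped Ring

section CStarAlgebra

variable {A : Type*} [CStarAlgebra A] [PartialOrder A] [StarOrderedRing A]

section Jensen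

variable {ι : Type*} [Fintype ι]

lemma star_mul_add_star_mul_sub_conjugate_le {x : A} (hx : IsStrictlyPositive x) (m v : A) :
    star v * m + star m * v - star v * x * v ≤ star m * x⁻¹ʳ * m := by
  have hleft : x⁻¹ʳ * x = 1 := Ring.inverse_mul_cancel x hx.isUnit
  have hright : x * x⁻¹ʳ = 1 := Ring.mul_inverse_cancel x hx.isUnit
  have hsquare : star (m - x * v) * x⁻¹ʳ * (m - x * v) =
      star m * x⁻¹ʳ * m - (star v * m + star m * v - star v * x * v) := by
    calc star (m - x * v) * x⁻¹ʳ * (m - x * v)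
        = star m * x⁻¹ʳ * m - star m * (x⁻¹ʳ * x) * v - star v * (x * x⁻¹ʳ) * m
            + star v * (x * x⁻¹ʳ) * x * v := by
          rw [star_sub, star_mul, hx.isSelfAdjoint.star_eq]; noncomm_ring
      _ = _ := by rw [hleft, hright]; noncomm_ring
  rw [← sub_nonneg, ← hsquare]
  exact star_left_conjugate_nonneg hx.ringInverse.nonneg _

lemma ringInverse_sum_conjugate_le {m x : ι → A} (hm : ∑ i, star (m i) * m i = 1)
    (hx : ∀ i, IsStrictlyPositive (x i))
    (hsum : IsStrictlyPositive (∑ i, star (m i) * x i * m i)) :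
    (∑ i, star (m i) * x i * m i)⁻¹ʳ ≤ ∑ i, star (m i) * (x i)⁻¹ʳ * m i := by
  set y := ∑ i, star (m i) * x i * m i with hy
  set w := y⁻¹ʳ with hw
  have hstar : star w = w := hsum.ringInverse.isSelfAdjoint.star_eq
  calc w = w * (∑ i, star (m i) * m i) + (∑ i, star (m i) * m i) * w - w * y * w := by
        rw [hm, hw, Ring.inverse_mul_cancel y hsum.isUnit]; noncomm_ring
    _ = ∑ i, (star (m i * w) * m i + star (m i) * (m i * w)
          - star (m i * w) * x i * (m i * w)) := by
        simp only [hy, star_mul, hstar, Finset.sum_sub_distrib, Finset.sum_add_distrib,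
          Finset.mul_sum, Finset.sum_mul, mul_assoc]
    _ ≤ ∑ i, star (m i) * (x i)⁻¹ʳ * m i :=
        Finset.sum_le_sum fun i _ => star_mul_add_star_mul_sub_conjugate_le (hx i) _ _

lemma cfc_rpowIntegrand₀₁_eq {p t : ℝ} (hp : p ∈ Set.Ioo 0 1) (ht : 0 < t) {a : A} (ha : 0 ≤ a) :
    cfc (Real.rpowIntegrand₀₁ p t) a =
      t ^ (p - 1) • (1 : A) - t ^ p • (algebraMap ℝ A t + a)⁻¹ʳ := by
  have hspec (r) (hr : r ∈ spectrum ℝ a) : t + r ≠ 0 :=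
    (add_pos_of_pos_of_nonneg ht (spectrum_nonneg_of_nonneg ha hr)).ne'
  have hcont : ContinuousOn (fun z : ℝ => (t + z)⁻¹) (spectrum ℝ a) :=
    (continuousOn_const.add continuousOn_id).inv₀ hspec
  have hinv : cfc (fun z : ℝ => (t + z)⁻¹) a = (algebraMap ℝ A t + a)⁻¹ʳ := by
    rw [cfc_inv (fun z => t + z) a hspec, cfc_const_add t (fun z => z) a, cfc_id' ℝ a]
  rw [Real.rpowIntegrand₀₁_eq_sub hp.2.ne ht,
    cfc_sub _ _ a continuousOn_const (hcont.const_mul _),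
    cfc_const _ a, cfc_const_mul _ _ a hcont, hinv, Algebra.algebraMap_eq_smul_one]

lemma sum_conjugate_cfc_rpowIntegrand₀₁_le {p t : ℝ} (hp : p ∈ Set.Ioo 0 1) (ht : 0 < t)
    {m a : ι → A} (hm : ∑ i, star (m i) * m i = 1) (ha : ∀ i, 0 ≤ a i) :
    ∑ i, star (m i) * cfc (Real.rpowIntegrand₀₁ p t) (a i) * m i ≤
      cfc (Real.rpowIntegrand₀₁ p t) (∑ i, star (m i) * a i * m i) := by
  have hsum : 0 ≤ ∑ i, star (m i) * a i * m i :=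
    Finset.sum_nonneg fun i _ => star_left_conjugate_nonneg (ha i) _
  have hpos {b : A} (hb : 0 ≤ b) : IsStrictlyPositive (algebraMap ℝ A t + b) :=
    (isStrictlyPositive_algebraMap ht).add_nonneg hb
  have hshift : ∑ i, star (m i) * (algebraMap ℝ A t + a i) * m i =
      algebraMap ℝ A t + ∑ i, star (m i) * a i * m i := by
    simp [mul_add, add_mul, Finset.sum_add_distrib, Algebra.algebraMap_eq_smul_one,
      ← Finset.smul_sum, hm]
  calc ∑ i, star (m i) * cfc (Real.rpowIntegrand₀₁ p t) (a i) * m i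
      = t ^ (p - 1) • (1 : A) -
          t ^ p • ∑ i, star (m i) * (algebraMap ℝ A t + a i)⁻¹ʳ * m i := by
        simp only [cfc_rpowIntegrand₀₁_eq hp ht (ha _), mul_sub, sub_mul, Finset.sum_sub_distrib,
          mul_smul_comm, smul_mul_assoc, ← Finset.smul_sum, mul_one, hm]
    _ ≤ t ^ (p - 1) • (1 : A) - t ^ p • (algebraMap ℝ A t + ∑ i, star (m i) * a i * m i)⁻¹ʳ := by
        rw [← hshift]
        gcongr
        exact ringInverse_sum_conjugate_le hm (fun i => hpos (ha i)) (hshift ▸ hpos hsum)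
    _ = _ := (cfc_rpowIntegrand₀₁_eq hp ht hsum).symm

lemma sum_conjugate_rpow_le_of_sum_eq_one {p : ℝ} (hp : p ∈ Set.Ioo 0 1)
    {m a : ι → A} (hm : ∑ i, star (m i) * m i = 1) (ha : ∀ i, 0 ≤ a i) :
    ∑ i, star (m i) * a i ^ p * m i ≤ (∑ i, star (m i) * a i * m i) ^ p := by
  lift p to NNReal using hp.1.le
  have hsum : 0 ≤ ∑ i, star (m i) * a i * m i :=
    Finset.sum_nonneg fun i _ => star_left_conjugate_nonneg (ha i) _
  obtain ⟨μ, hμ⟩ := CFC.exists_measure_nnrpow_eq_integral_cfcₙ_rpowIntegrand₀₁ A (p := p)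
    (by exact_mod_cast hp)
  have hp0 : 0 < p := by exact_mod_cast hp.1
  simp only [← CFC.nnrpow_eq_rpow hp0, (hμ _ (ha _)).2, (hμ _ hsum).2]
  have hint (i) : IntegrableOn
      (fun t => star (m i) * cfcₙ (Real.rpowIntegrand₀₁ p t) (a i) * m i) (Set.Ioi 0) μ :=
    ((hμ _ (ha i)).1.const_mul _).mul_const _
  calc ∑ i, star (m i) * (∫ t in Set.Ioi 0, cfcₙ (Real.rpowIntegrand₀₁ p t) (a i) ∂μ) * m i
      = ∫ t in Set.Ioi 0, ∑ i, star (m i) * cfcₙ (Real.rpowIntegrand₀₁ p t) (a i) * m i ∂μ := by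
        rw [integral_finsetSum _ fun i _ => hint i]
        refine Finset.sum_congr rfl fun i _ => ?_
        rw [← integral_const_mul_of_integrable (hμ _ (ha i)).1,
          ← integral_mul_const_of_integrable ((hμ _ (ha i)).1.const_mul _)]
    _ ≤ ∫ t in Set.Ioi 0, cfcₙ (Real.rpowIntegrand₀₁ p t) (∑ i, star (m i) * a i * m i) ∂μ := by
        refine setIntegral_mono_on (integrable_finsetSum _ fun i _ => hint i) (hμ _ hsum).1
          measurableSet_Ioi fun t ht => ?_
        have hcfc {b : A} (hb : 0 ≤ b) :
            cfcₙ (Real.rpowIntegrand₀₁ p t) b = cfc (Real.rpowIntegrand₀₁ p t) b :=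
          cfcₙ_eq_cfc ((Real.continuousOn_rpowIntegrand₀₁_Ici hp ht).mono
            (by grind))
        simp only [hcfc (ha _), hcfc hsum]
        exact sum_conjugate_cfc_rpowIntegrand₀₁_le hp ht hm ha

theorem sum_conjugate_rpow_le {p : ℝ} (hp : p ∈ Set.Icc 0 1)
    {m a : ι → A} (hm : ∑ i, star (m i) * m i ≤ 1) (ha : ∀ i, 0 ≤ a i) :
    ∑ i, star (m i) * a i ^ p * m i ≤ (∑ i, star (m i) * a i * m i) ^ p := by
  have hsum : 0 ≤ ∑ i, star (m i) * a i * m i :=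
    Finset.sum_nonneg fun i _ => star_left_conjugate_nonneg (ha i) _
  obtain rfl | hp0 := hp.1.eq_or_lt
  · simpa [CFC.rpow_zero _ (ha _), CFC.rpow_zero _ hsum] using hm
  obtain rfl | hp1 := hp.2.eq_or_lt
  · simp [CFC.rpow_one _ (ha _), CFC.rpow_one _ hsum]
  have hcompl : 0 ≤ 1 - ∑ i, star (m i) * m i := sub_nonneg.2 hm
  set r := CFC.sqrt (1 - ∑ i, star (m i) * m i)
  have hr : star r * r = 1 - ∑ i, star (m i) * m i := by
    rw [(CFC.sqrt_nonneg _).isSelfAdjoint.star_eq, CFC.sqrt_mul_sqrt_self _ hcompl]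
  have hzero : (0 : A) ^ p = 0 := CFC.zero_rpow hp0.ne'
  have := sum_conjugate_rpow_le_of_sum_eq_one ⟨hp0, hp1⟩ (ι := Option ι)
    (m := fun o => o.elim r m) (a := fun o => o.elim 0 a) (by simp [hr])
    (by rintro (_ | i) <;> simp [ha])
  simpa [hzero] using this

end Jensen

section RealScalars

lemma convexCombination_pos {l : ℝ} (hl : l ∈ Set.Icc 0 1) {x y : ℝ} (hx : 0 < x) (hy : 0 < y) :
    0 < l * x + (1 - l) * y := by
  simpa using convex_Ioi (0 : ℝ) (Set.mem_Ioi.2 hx) (Set.mem_Ioi.2 hy) hl.1 (sub_nonneg.2 hl.2)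
    (add_sub_cancel _ _)

lemma rpow_neg_half_mul_mul_rpow_neg_half {x : ℝ} (hx : 0 < x) (y : ℝ) :
    x ^ (-(1 / 2) : ℝ) * y * x ^ (-(1 / 2) : ℝ) = y / x := by
  rw [mul_right_comm, ← Real.rpow_add hx, ← neg_add, add_halves, Real.rpow_neg_one,
    inv_mul_eq_div]

lemma rpow_geoMean_eq {x y : ℝ} (hx : 0 < x) (hy : 0 ≤ y) (p : ℝ) :
    x ^ (1 / 2 : ℝ) * (x ^ (-(1 / 2) : ℝ) * y * x ^ (-(1 / 2) : ℝ)) ^ p * x ^ (1 / 2 : ℝ) =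
      x ^ (1 - p) * y ^ p := by
  have hhalf : x ^ (1 / 2 : ℝ) * x ^ (1 / 2 : ℝ) = x := by
    rw [← Real.rpow_add hx, add_halves, Real.rpow_one]
  rw [rpow_neg_half_mul_mul_rpow_neg_half hx, mul_right_comm, hhalf, Real.div_rpow hy hx.le,
    Real.rpow_sub hx, Real.rpow_one, div_mul_eq_mul_div, mul_div_assoc]

lemma rpow_one_div_rpow_one_sub_mul {h p : ℝ} (hh : 0 < h) (hp : p ≠ 0) :
    (h ^ (1 / p)) ^ (1 - p) * h = h ^ (1 / p) := by
  nth_rw 2 [← Real.rpow_one h]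
  rw [← Real.rpow_mul hh.le, ← Real.rpow_add hh]
  congr 1
  field_simp
  ring

lemma integral_convexCombination_rpow {u v r : ℝ} (huv : u ≠ v) (hr : -1 < r) :
    ∫ l in (0 : ℝ)..1, (l * u + (1 - l) * v) ^ r =
      (u ^ (r + 1) - v ^ (r + 1)) / ((r + 1) * (u - v)) := by
  have haffine (l : ℝ) : l * u + (1 - l) * v = (u - v) * l + v := by ring
  simp only [haffine]
  rw [intervalIntegral.integral_comp_mul_add (fun x => x ^ r) (sub_ne_zero.2 huv),
    integral_rpow (.inl hr), smul_eq_mul, mul_zero, zero_add, mul_one, sub_add_cancel,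
    inv_mul_eq_div, div_div]

end RealScalars

section Conjugation

lemma star_rpow (a : A) (q : ℝ) : star (a ^ q) = a ^ q :=
  CFC.rpow_nonneg.isSelfAdjoint.star_eq

lemma rpow_half_mul_rpow_half {a : A} (ha : 0 ≤ a) : a ^ (1 / 2 : ℝ) * a ^ (1 / 2 : ℝ) = a := by
  rw [← CFC.sqrt_eq_rpow, CFC.sqrt_mul_sqrt_self a ha]

lemma rpow_half_conjugate_rpow_neg_half {a : A} (ha : IsStrictlyPositive a) (b : A) :
    a ^ (1 / 2 : ℝ) * (a ^ (-(1 / 2) : ℝ) * b * a ^ (-(1 / 2) : ℝ)) * a ^ (1 / 2 : ℝ) = b := by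
  calc _ = (a ^ (1 / 2 : ℝ) * a ^ (-(1 / 2) : ℝ)) * b *
        (a ^ (-(1 / 2) : ℝ) * a ^ (1 / 2 : ℝ)) := by simp only [mul_assoc]
    _ = b := by rw [CFC.rpow_mul_rpow_neg _ ha, CFC.rpow_neg_mul_rpow _ ha, one_mul, mul_one]

lemma isStrictlyPositive_rpow_conjugate {a b : A} (ha : IsStrictlyPositive a)
    (hb : IsStrictlyPositive b) (q : ℝ) : IsStrictlyPositive (a ^ q * b * a ^ q) :=
  hb.conjugate_of_isUnit_of_isSelfAdjoint _ _ (ha.rpow _ _).isUnit CFC.rpow_nonneg.isSelfAdjoint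

lemma smul_rpow {c : ℝ} (hc : 0 < c) {a : A} (ha : IsStrictlyPositive a) (q : ℝ) :
    (c • a) ^ q = c ^ q • a ^ q := by
  have hpos (x) (hx : x ∈ spectrum ℝ a) : 0 < x := ha.spectrum_pos hx
  have hcont : ContinuousOn (fun x : ℝ => x ^ q) (spectrum ℝ a) :=
    continuousOn_id.rpow_const fun x hx => .inl (hpos x hx).ne'
  calc (c • a) ^ q = cfc (fun x => c * x) a ^ q := by rw [cfc_const_mul_id c a]
    _ = cfc (fun x => (c * x) ^ q) a :=
        CFC.cfc_rpow (fun x hx => mul_pos hc (hpos x hx)) (by fun_prop)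
    _ = cfc (fun x => c ^ q * x ^ q) a :=
        cfc_congr fun x hx => Real.mul_rpow hc.le (hpos x hx).le
    _ = c ^ q • a ^ q := by rw [cfc_const_mul _ _ a hcont, CFC.rpow_eq_cfc_real]

lemma smul_one_rpow {c : ℝ} (hc : 0 < c) (q : ℝ) : (c • (1 : A)) ^ q = c ^ q • 1 := by
  rw [smul_rpow hc isStrictlyPositive_one, CFC.one_rpow]

lemma exists_pos_le_smul {g x : A} (hg : IsStrictlyPositive g) (hx : IsSelfAdjoint x) :
    ∃ c : ℝ, 0 < c ∧ x ≤ c • g := by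
  set k := g ^ (-(1 / 2) : ℝ) * x * g ^ (-(1 / 2) : ℝ)
  have hk_sa : IsSelfAdjoint k := by
    simpa only [star_rpow] using hx.conjugate' (g ^ (-(1 / 2) : ℝ))
  have hk_le : k ≤ (‖k‖ + 1) • (1 : A) := by
    rw [← Algebra.algebraMap_eq_smul_one]
    exact hk_sa.le_algebraMap_norm_self.trans
      (algebraMap_mono A (le_add_of_nonneg_right zero_le_one))
  refine ⟨‖k‖ + 1, by positivity, ?_⟩
  calc x = g ^ (1 / 2 : ℝ) * k * g ^ (1 / 2 : ℝ) := (rpow_half_conjugate_rpow_neg_half hg x).symm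
    _ ≤ g ^ (1 / 2 : ℝ) * ((‖k‖ + 1) • 1) * g ^ (1 / 2 : ℝ) :=
        CFC.rpow_nonneg.isSelfAdjoint.conjugate_le_conjugate hk_le
    _ = (‖k‖ + 1) • g := by
        rw [mul_smul_comm, mul_one, smul_mul_assoc, rpow_half_mul_rpow_half hg.nonneg]

lemma convex_setOf_isStrictlyPositive_prod :
    Convex ℝ {x : A × A | IsStrictlyPositive x.1 ∧ IsStrictlyPositive x.2} :=
  CStarAlgebra.convexOn_ringInverse.1.prod CStarAlgebra.convexOn_ringInverse.1

end Conjugation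

section GeometricMean

/-- The weighted geometric mean `a #ₚ b` (Kubo–Ando), meant for strictly positive `a` and
nonnegative `b`. -/
noncomputable def geoMean (p : ℝ) (a b : A) : A :=
  a ^ (1 / 2 : ℝ) * (a ^ (-(1 / 2) : ℝ) * b * a ^ (-(1 / 2) : ℝ)) ^ p * a ^ (1 / 2 : ℝ)

theorem sum_conjugate_geoMean_le {ι : Type*} [Fintype ι] {p : ℝ} (hp : p ∈ Set.Icc 0 1)
    {m a b : ι → A} {c : A} (ha : ∀ i, IsStrictlyPositive (a i)) (hb : ∀ i, 0 ≤ b i)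
    (hc : IsStrictlyPositive c) (hac : ∑ i, star (m i) * a i * m i ≤ c) :
    ∑ i, star (m i) * geoMean p (a i) (b i) * m i ≤
      geoMean p c (∑ i, star (m i) * b i * m i) := by
  let T i := a i ^ (1 / 2 : ℝ) * m i * c ^ (-(1 / 2) : ℝ)
  have hT (x : ι → A) : ∑ i, star (T i) * x i * T i = c ^ (-(1 / 2) : ℝ) *
      (∑ i, star (m i) * (a i ^ (1 / 2 : ℝ) * x i * a i ^ (1 / 2 : ℝ)) * m i) *
      c ^ (-(1 / 2) : ℝ) := by
    simp only [T, star_mul, star_rpow, Finset.mul_sum, Finset.sum_mul, mul_assoc]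
  have hcontr : ∑ i, star (T i) * T i ≤ 1 := by
    calc ∑ i, star (T i) * T i
        = c ^ (-(1 / 2) : ℝ) * (∑ i, star (m i) * a i * m i) * c ^ (-(1 / 2) : ℝ) := by
          simpa only [Pi.one_apply, mul_one, rpow_half_mul_rpow_half (ha _).nonneg] using hT 1
      _ ≤ c ^ (-(1 / 2) : ℝ) * c * c ^ (-(1 / 2) : ℝ) :=
          CFC.rpow_nonneg.isSelfAdjoint.conjugate_le_conjugate hac
      _ = 1 := CFC.conjugate_rpow_neg_one_half c hc
  have hjensen := sum_conjugate_rpow_le hp hcontr fun i =>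
    (CFC.rpow_nonneg (a := a i) (y := -(1 / 2))).isSelfAdjoint.conjugate_nonneg (hb i)
  rw [hT, hT] at hjensen
  simp only [rpow_half_conjugate_rpow_neg_half (ha _)] at hjensen
  calc ∑ i, star (m i) * geoMean p (a i) (b i) * m i
      = c ^ (1 / 2 : ℝ) * (c ^ (-(1 / 2) : ℝ) *
          (∑ i, star (m i) * geoMean p (a i) (b i) * m i) * c ^ (-(1 / 2) : ℝ)) *
          c ^ (1 / 2 : ℝ) := (rpow_half_conjugate_rpow_neg_half hc _).symm
    _ ≤ geoMean p c (∑ i, star (m i) * b i * m i) :=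
        CFC.rpow_nonneg.isSelfAdjoint.conjugate_le_conjugate hjensen

lemma conjugate_geoMean_le {p : ℝ} (hp : p ∈ Set.Icc 0 1) {m a b c : A}
    (ha : IsStrictlyPositive a) (hb : 0 ≤ b) (hc : IsStrictlyPositive c)
    (hac : star m * a * m ≤ c) :
    star m * geoMean p a b * m ≤ geoMean p c (star m * b * m) := by
  simpa using sum_conjugate_geoMean_le hp (ι := Unit) (m := fun _ => m) (a := fun _ => a)
    (b := fun _ => b) (fun _ => ha) (fun _ => hb) hc (by simpa using hac)

lemma geoMean_le_geoMean_left {p : ℝ} (hp : p ∈ Set.Icc 0 1) {a b c : A}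
    (ha : IsStrictlyPositive a) (hac : a ≤ c) (hb : 0 ≤ b) :
    geoMean p a b ≤ geoMean p c b := by
  simpa using conjugate_geoMean_le hp (m := 1) ha hb (ha.of_le hac) (by simpa using hac)

lemma conjugate_geoMean {p : ℝ} (hp : p ∈ Set.Icc 0 1) {m a b : A} (hm : IsUnit m)
    (ha : IsStrictlyPositive a) (hb : 0 ≤ b) :
    star m * geoMean p a b * m = geoMean p (star m * a * m) (star m * b * m) := by
  have ha' : IsStrictlyPositive (star m * a * m) :=
    hm.isStrictlyPositive_star_left_conjugate_iff.2 ha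
  refine le_antisymm (conjugate_geoMean_le hp ha hb ha' le_rfl) ?_
  obtain ⟨u, rfl⟩ := hm
  have hcancel (v : Aˣ) (x : A) : star (↑v⁻¹ : A) * (star (v : A) * x * v) * ↑v⁻¹ = x := by
    rw [← mul_assoc, ← mul_assoc, ← star_mul, Units.mul_inv, star_one, one_mul, mul_assoc,
      Units.mul_inv, mul_one]
  have hle := conjugate_geoMean_le hp ha' (star_left_conjugate_nonneg hb (u : A)) ha
    (hcancel u a).le
  rw [hcancel] at hle
  have hcancel' := hcancel u⁻¹
  rw [inv_inv] at hcancel'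
  simpa only [hcancel'] using star_left_conjugate_le_conjugate hle (u : A)

theorem concaveOn_geoMean {p : ℝ} (hp : p ∈ Set.Icc 0 1) :
    ConcaveOn ℝ {x : A × A | IsStrictlyPositive x.1 ∧ 0 ≤ x.2} (fun x => geoMean p x.1 x.2) := by
  have hconv : Convex ℝ {x : A × A | IsStrictlyPositive x.1 ∧ 0 ≤ x.2} :=
    CStarAlgebra.convexOn_ringInverse.1.prod (convex_Ici 0)
  refine ⟨hconv, fun x hx y hy α β hα hβ hαβ => ?_⟩
  have hsqrt {w : ℝ} (hw : 0 ≤ w) (z : A) : star (√w • (1 : A)) * z * (√w • 1) = w • z := by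
    simp [smul_smul, Real.mul_self_sqrt hw]
  have hsum : IsStrictlyPositive (α • x.1 + β • y.1) := (hconv hx hy hα hβ hαβ).1
  have h := sum_conjugate_geoMean_le hp (m := ![√α • (1 : A), √β • 1]) (a := ![x.1, y.1])
    (b := ![x.2, y.2]) (c := α • x.1 + β • y.1) (by simp [Fin.forall_fin_two, hx.1, hy.1])
    (by simp [Fin.forall_fin_two, hx.2, hy.2]) hsum
    (by simp only [Fin.sum_univ_two, Matrix.cons_val_zero, Matrix.cons_val_one, hsqrt hα, hsqrt hβ,
      le_rfl])
  simpa only [Fin.sum_univ_two, Matrix.cons_val_zero, Matrix.cons_val_one, hsqrt hα, hsqrt hβ,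
    Prod.fst_add, Prod.smul_fst, Prod.snd_add, Prod.smul_snd] using h

lemma geoMean_smul_left {p c : ℝ} (hc : 0 < c) {a b : A} (ha : IsStrictlyPositive a)
    (hb : IsStrictlyPositive b) : geoMean p (c • a) b = c ^ (1 - p) • geoMean p a b := by
  simp only [geoMean, smul_rpow hc ha, smul_mul_assoc, mul_smul_comm, smul_smul]
  rw [smul_rpow (by positivity) (isStrictlyPositive_rpow_conjugate ha hb _)]
  simp only [smul_mul_assoc, mul_smul_comm, smul_smul]
  congr 1
  have hexp := rpow_geoMean_eq hc zero_le_one p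
  rw [mul_one, Real.one_rpow, mul_one] at hexp
  rw [← hexp]
  ring

lemma geoMean_cfc {p : ℝ} {a : A} (ha : IsSelfAdjoint a) {f g : ℝ → ℝ}
    (hf : ContinuousOn f (spectrum ℝ a)) (hf0 : ∀ x ∈ spectrum ℝ a, 0 < f x)
    (hg : ContinuousOn g (spectrum ℝ a)) (hg0 : ∀ x ∈ spectrum ℝ a, 0 < g x) :
    geoMean p (cfc f a) (cfc g a) = cfc (fun x => f x ^ (1 - p) * g x ^ p) a := by
  have hfq (q : ℝ) : ContinuousOn (fun x => f x ^ q) (spectrum ℝ a) :=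
    hf.rpow_const fun x hx => .inl (hf0 x hx).ne'
  have hfg : ContinuousOn (fun x => f x ^ (-(1 / 2) : ℝ) * g x) (spectrum ℝ a) := (hfq _).mul hg
  have hfgf : ContinuousOn (fun x => f x ^ (-(1 / 2) : ℝ) * g x * f x ^ (-(1 / 2) : ℝ))
      (spectrum ℝ a) := hfg.mul (hfq _)
  have hfgf_pos (x) (hx : x ∈ spectrum ℝ a) :
      0 < f x ^ (-(1 / 2) : ℝ) * g x * f x ^ (-(1 / 2) : ℝ) := by
    have := hf0 x hx
    have := hg0 x hx
    positivity
  have hpow : ContinuousOn (fun x => (f x ^ (-(1 / 2) : ℝ) * g x * f x ^ (-(1 / 2) : ℝ)) ^ p)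
      (spectrum ℝ a) := hfgf.rpow_const fun x hx => .inl (hfgf_pos x hx).ne'
  have hfpow : ContinuousOn (fun x => f x ^ (1 / 2 : ℝ) *
      (f x ^ (-(1 / 2) : ℝ) * g x * f x ^ (-(1 / 2) : ℝ)) ^ p) (spectrum ℝ a) := (hfq _).mul hpow
  rw [geoMean, CFC.cfc_rpow hf0, CFC.cfc_rpow hf0, ← cfc_mul _ _ a (hfq _) hg,
    ← cfc_mul _ _ a hfg (hfq _), CFC.cfc_rpow hfgf_pos hfgf,
    ← cfc_mul _ _ a (hfq _) hpow, ← cfc_mul _ _ a hfpow (hfq _)]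
  exact cfc_congr fun x hx => rpow_geoMean_eq (hf0 x hx) (hg0 x hx).le p

end GeometricMean

section PowerMean

/-- The power mean of strictly positive `a` and `b` with exponent `p ≠ 0` and weights `l` and
`1 - l`, formed as the perspective of `x ↦ (l x ^ p + 1 - l) ^ (1 / p)`. -/
noncomputable def powerMean (l p : ℝ) (a b : A) : A :=
  b ^ (1 / 2 : ℝ) *
    (l • (b ^ (-(1 / 2) : ℝ) * a * b ^ (-(1 / 2) : ℝ)) ^ p + (1 - l) • 1) ^ (1 / p) *
    b ^ (1 / 2 : ℝ)

lemma isStrictlyPositive_smul_rpow_add {l : ℝ} (hl : l ∈ Set.Icc 0 1) {a : A}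
    (ha : IsStrictlyPositive a) (p : ℝ) : IsStrictlyPositive (l • a ^ p + (1 - l) • (1 : A)) :=
  CStarAlgebra.convexOn_ringInverse.1 (ha.rpow _ _) isStrictlyPositive_one hl.1
    (sub_nonneg.2 hl.2) (add_sub_cancel _ _)

lemma smul_geoMean_add_smul_geoMean_one {p l : ℝ} (hp : p ≠ 0) (hl : l ∈ Set.Icc 0 1) {x : A}
    (hx : IsStrictlyPositive x) :
    l • geoMean p ((l • x ^ p + (1 - l) • 1) ^ (1 / p)) x +
      (1 - l) • geoMean p ((l • x ^ p + (1 - l) • 1) ^ (1 / p)) 1 =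
      (l • x ^ p + (1 - l) • 1) ^ (1 / p) := by
  let h (t : ℝ) := l * t ^ p + (1 - l)
  let f (t : ℝ) := h t ^ (1 / p)
  have hspec (t) (ht : t ∈ spectrum ℝ x) : 0 < t := hx.spectrum_pos ht
  have hh_pos (t) (ht : t ∈ spectrum ℝ x) : 0 < h t := by
    simpa [h] using convexCombination_pos hl (Real.rpow_pos_of_pos (hspec t ht) p) one_pos
  have hf_pos (t) (ht : t ∈ spectrum ℝ x) : 0 < f t := Real.rpow_pos_of_pos (hh_pos t ht) _
  have hpow : ContinuousOn (fun t : ℝ => t ^ p) (spectrum ℝ x) :=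
    continuousOn_id.rpow_const fun t ht => .inl (hspec t ht).ne'
  have hh : ContinuousOn h (spectrum ℝ x) := (hpow.const_mul l).add continuousOn_const
  have hf : ContinuousOn f (spectrum ℝ x) :=
    hh.rpow_const fun t ht => .inl (hh_pos t ht).ne'
  have hfp : ContinuousOn (fun t => f t ^ (1 - p)) (spectrum ℝ x) :=
    hf.rpow_const fun t ht => .inl (hf_pos t ht).ne'
  have hY : (l • x ^ p + (1 - l) • 1) ^ (1 / p) = cfc f x := by
    rw [← CFC.cfc_rpow hh_pos hh, cfc_add_const _ _ x (hpow.const_mul l), cfc_const_mul _ _ x hpow,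
      ← CFC.rpow_eq_cfc_real hx.nonneg, Algebra.algebraMap_eq_smul_one]
  have hYx : geoMean p (cfc f x) x = cfc (fun t => f t ^ (1 - p) * t ^ p) x := by
    simpa only [cfc_id ℝ x, id] using
      geoMean_cfc (p := p) hx.isSelfAdjoint hf hf_pos continuousOn_id hspec
  have hY1 : geoMean p (cfc f x) 1 = cfc (fun t => f t ^ (1 - p)) x := by
    simpa only [cfc_const_one ℝ x, Real.one_rpow, mul_one] using
      geoMean_cfc (p := p) hx.isSelfAdjoint hf hf_pos continuousOn_const fun _ _ => one_pos
  have hfph : ContinuousOn (fun t => f t ^ (1 - p) * t ^ p) (spectrum ℝ x) := hfp.mul hpow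
  rw [hY, hYx, hY1, ← cfc_const_mul _ _ x hfph, ← cfc_const_mul _ _ x hfp,
    ← cfc_add _ _ _ (hfph.const_mul l) (hfp.const_mul _)]
  refine cfc_congr fun t ht => ?_
  calc l * (f t ^ (1 - p) * t ^ p) + (1 - l) * f t ^ (1 - p) = f t ^ (1 - p) * h t := by
        simp only [h]; ring
    _ = f t := rpow_one_div_rpow_one_sub_mul (hh_pos t ht) hp

lemma isStrictlyPositive_powerMean {l : ℝ} (hl : l ∈ Set.Icc 0 1) (p : ℝ) {a b : A}
    (ha : IsStrictlyPositive a) (hb : IsStrictlyPositive b) :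
    IsStrictlyPositive (powerMean l p a b) := by
  have hX := isStrictlyPositive_rpow_conjugate hb ha (-(1 / 2))
  exact isStrictlyPositive_rpow_conjugate hb
    ((isStrictlyPositive_smul_rpow_add hl hX p).rpow _ _) _

theorem smul_geoMean_powerMean_add {p l : ℝ} (hp : p ∈ Set.Ioc 0 1) (hl : l ∈ Set.Icc 0 1)
    {a b : A} (ha : IsStrictlyPositive a) (hb : IsStrictlyPositive b) :
    l • geoMean p (powerMean l p a b) a + (1 - l) • geoMean p (powerMean l p a b) b =
      powerMean l p a b := by
  have hpIcc : p ∈ Set.Icc (0 : ℝ) 1 := Set.Ioc_subset_Icc_self hp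
  set m := b ^ (1 / 2 : ℝ) with hm
  have hm_unit : IsUnit m := (hb.rpow _ _).isUnit
  have hm_star : star m = m := star_rpow b _
  set x := b ^ (-(1 / 2) : ℝ) * a * b ^ (-(1 / 2) : ℝ)
  have hx_pos : IsStrictlyPositive x := isStrictlyPositive_rpow_conjugate hb ha _
  set y := (l • x ^ p + (1 - l) • 1) ^ (1 / p)
  have hy_pos : IsStrictlyPositive y := (isStrictlyPositive_smul_rpow_add hl hx_pos p).rpow _ _
  have hconj (z : A) (hz : 0 ≤ z) : geoMean p (m * y * m) (m * z * m) = m * geoMean p y z * m := by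
    simpa only [hm_star] using (conjugate_geoMean hpIcc hm_unit hy_pos hz).symm
  have hma : m * x * m = a := rpow_half_conjugate_rpow_neg_half hb a
  have hmb : m * 1 * m = b := by rw [mul_one, hm, rpow_half_mul_rpow_half hb.nonneg]
  calc l • geoMean p (m * y * m) a + (1 - l) • geoMean p (m * y * m) b
      = m * (l • geoMean p y x + (1 - l) • geoMean p y 1) * m := by
        rw [← hmb, ← hma, hconj x hx_pos.nonneg, hconj 1 zero_le_one]
        simp only [mul_add, add_mul, mul_smul_comm, smul_mul_assoc]
    _ = m * y * m := by rw [smul_geoMean_add_smul_geoMean_one hp.1.ne' hl hx_pos]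

theorem le_powerMean {p l : ℝ} (hp : p ∈ Set.Ioc 0 1) (hl : l ∈ Set.Icc 0 1)
    {a b x : A} (ha : IsStrictlyPositive a) (hb : IsStrictlyPositive b)
    (hx : IsStrictlyPositive x) (hle : x ≤ l • geoMean p x a + (1 - l) • geoMean p x b) :
    x ≤ powerMean l p a b := by
  have hpIcc : p ∈ Set.Icc (0 : ℝ) 1 := Set.Ioc_subset_Icc_self hp
  set g := powerMean l p a b with hg
  have hg_pos : IsStrictlyPositive g := isStrictlyPositive_powerMean hl p ha hb
  have hstep {c : ℝ} (hc : 0 < c) (hxc : x ≤ c • g) : x ≤ c ^ (1 - p) • g := by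
    have hl' : 0 ≤ 1 - l := sub_nonneg.2 hl.2
    calc x ≤ l • geoMean p x a + (1 - l) • geoMean p x b := hle
      _ ≤ l • geoMean p (c • g) a + (1 - l) • geoMean p (c • g) b :=
          add_le_add
            (smul_le_smul_of_nonneg_left (geoMean_le_geoMean_left hpIcc hx hxc ha.nonneg) hl.1)
            (smul_le_smul_of_nonneg_left (geoMean_le_geoMean_left hpIcc hx hxc hb.nonneg) hl')
      _ = c ^ (1 - p) • (l • geoMean p g a + (1 - l) • geoMean p g b) := by
          rw [geoMean_smul_left hc hg_pos ha, geoMean_smul_left hc hg_pos hb, smul_add,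
            smul_comm l, smul_comm (1 - l)]
      _ = c ^ (1 - p) • g := by rw [hg, smul_geoMean_powerMean_add hp hl ha hb]
  obtain ⟨c, hc, hxc⟩ := exists_pos_le_smul hg_pos hx.isSelfAdjoint
  have hiter (k : ℕ) : x ≤ c ^ (1 - p) ^ k • g := by
    induction k with
    | zero => simpa using hxc
    | succ k ih =>
      simpa only [← Real.rpow_mul hc.le, ← pow_succ] using hstep (Real.rpow_pos_of_pos hc _) ih
  have hlim : Filter.Tendsto (fun k : ℕ => c ^ (1 - p) ^ k • g) Filter.atTop (nhds g) := by
    have hpow : Filter.Tendsto (fun k : ℕ => (1 - p) ^ k) Filter.atTop (nhds 0) :=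
      tendsto_pow_atTop_nhds_zero_of_lt_one (sub_nonneg.2 hp.2) (sub_lt_self 1 hp.1)
    simpa using ((Real.continuousAt_const_rpow hc.ne').tendsto.comp hpow).smul_const g
  exact ge_of_tendsto' hlim hiter

theorem concaveOn_powerMean {p l : ℝ} (hp : p ∈ Set.Ioc 0 1) (hl : l ∈ Set.Icc 0 1) :
    ConcaveOn ℝ {x : A × A | IsStrictlyPositive x.1 ∧ IsStrictlyPositive x.2}
      (fun x => powerMean l p x.1 x.2) := by
  refine ⟨convex_setOf_isStrictlyPositive_prod, fun x hx y hy α β hα hβ hαβ => ?_⟩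
  have hz := convex_setOf_isStrictlyPositive_prod hx hy hα hβ hαβ
  have hpIcc : p ∈ Set.Icc (0 : ℝ) 1 := Set.Ioc_subset_Icc_self hp
  set gx := powerMean l p x.1 x.2 with hgx
  set gy := powerMean l p y.1 y.2 with hgy
  have hgx_pos : IsStrictlyPositive gx := isStrictlyPositive_powerMean hl p hx.1 hx.2
  have hgy_pos : IsStrictlyPositive gy := isStrictlyPositive_powerMean hl p hy.1 hy.2
  have hl' : 0 ≤ 1 - l := sub_nonneg.2 hl.2
  have hgeo {u v : A} (hu : IsStrictlyPositive u) (hv : IsStrictlyPositive v) :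
      α • geoMean p gx u + β • geoMean p gy v ≤ geoMean p (α • gx + β • gy) (α • u + β • v) :=
    (concaveOn_geoMean hpIcc).2 (x := (gx, u)) (y := (gy, v)) ⟨hgx_pos, hu.nonneg⟩
      ⟨hgy_pos, hv.nonneg⟩ hα hβ hαβ
  refine le_powerMean hp hl hz.1 hz.2
    (CStarAlgebra.convexOn_ringInverse.1 hgx_pos hgy_pos hα hβ hαβ) ?_
  calc α • gx + β • gy
      = l • (α • geoMean p gx x.1 + β • geoMean p gy y.1) +
          (1 - l) • (α • geoMean p gx x.2 + β • geoMean p gy y.2) := by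
        conv_lhs => rw [hgx, hgy, ← smul_geoMean_powerMean_add hp hl hx.1 hx.2,
          ← smul_geoMean_powerMean_add hp hl hy.1 hy.2]
        module
    _ ≤ _ := add_le_add (smul_le_smul_of_nonneg_left (hgeo hx.1 hy.1) hl.1)
        (smul_le_smul_of_nonneg_left (hgeo hx.2 hy.2) hl')

theorem concaveOn_powerMean_rpow {p l q : ℝ} (hp : p ∈ Set.Ioc 0 1) (hl : l ∈ Set.Icc 0 1)
    (hq : q ∈ Set.Icc 0 1) :
    ConcaveOn ℝ {x : A × A | IsStrictlyPositive x.1 ∧ IsStrictlyPositive x.2}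
      (fun x => powerMean l p x.1 x.2 ^ q) := by
  have hmean := concaveOn_powerMean (A := A) hp hl
  refine ⟨hmean.1, fun x hx y hy α β hα hβ hαβ => ?_⟩
  have hpos {z : A × A} (hz : IsStrictlyPositive z.1 ∧ IsStrictlyPositive z.2) :
      0 ≤ powerMean l p z.1 z.2 := (isStrictlyPositive_powerMean hl p hz.1 hz.2).nonneg
  exact ((CFC.concaveOn_rpow hq).2 (hpos hx) (hpos hy) hα hβ hαβ).trans
    (CFC.rpow_le_rpow hq (hmean.2 hx hy hα hβ hαβ))

lemma continuousOn_powerMean_weight (p : ℝ) {a b : A} (ha : IsStrictlyPositive a)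
    (hb : IsStrictlyPositive b) : ContinuousOn (fun l => powerMean l p a b) (Set.Icc 0 1) := by
  have hX := isStrictlyPositive_rpow_conjugate hb ha (-(1 / 2))
  have hinner : ContinuousOn (fun l : ℝ => l • (b ^ (-(1 / 2) : ℝ) * a * b ^ (-(1 / 2) : ℝ)) ^ p +
      (1 - l) • (1 : A)) (Set.Icc 0 1) :=
    Continuous.continuousOn (by fun_prop)
  exact (continuousOn_const.mul ((CFC.continuousOn_rpow (1 / p)).comp hinner fun l hl =>
    isStrictlyPositive_smul_rpow_add hl hX p)).mul continuousOn_const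

lemma continuousOn_powerMean_rpow_weight (p q : ℝ) {a b : A} (ha : IsStrictlyPositive a)
    (hb : IsStrictlyPositive b) : ContinuousOn (fun l => powerMean l p a b ^ q) (Set.Icc 0 1) :=
  (CFC.continuousOn_rpow q).comp (continuousOn_powerMean_weight p ha hb) fun _ hl =>
    isStrictlyPositive_powerMean hl p ha hb

/-- The analogue of `F₂` for two elements of a C⋆-algebra. -/
noncomputable def powerMeanIntegral (p : ℝ) (a b : A) : A :=
  (1 / p) • ∫ l in Set.Icc (0 : ℝ) 1, powerMean l p a b ^ (1 - p)

theorem concaveOn_powerMeanIntegral {p : ℝ} (hp : p ∈ Set.Ioc 0 1) :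
    ConcaveOn ℝ {x : A × A | IsStrictlyPositive x.1 ∧ IsStrictlyPositive x.2}
      (fun x => powerMeanIntegral p x.1 x.2) := by
  have hq : 1 - p ∈ Set.Icc (0 : ℝ) 1 := ⟨sub_nonneg.2 hp.2, sub_le_self 1 hp.1.le⟩
  refine ConcaveOn.smul (one_div_nonneg.2 hp.1.le) <| integral_concaveOn_of_integrand_ae
    convex_setOf_isStrictlyPositive_prod ?_ fun x hx =>
      (continuousOn_powerMean_rpow_weight p _ hx.1 hx.2).integrableOn_compact isCompact_Icc
  filter_upwards [ae_restrict_mem measurableSet_Icc] with l hl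
  exact concaveOn_powerMean_rpow hp hl hq

lemma powerMean_smul_one {l p s t : ℝ} (hl : l ∈ Set.Icc 0 1) (hp : p ≠ 0) (hs : 0 < s)
    (ht : 0 < t) : powerMean l p (s • (1 : A)) (t • 1) =
      (l * s ^ p + (1 - l) * t ^ p) ^ (1 / p) • 1 := by
  have htp := Real.rpow_pos_of_pos ht p
  have hhalf : t ^ (1 / 2 : ℝ) * t ^ (1 / 2 : ℝ) = t := by
    rw [← Real.rpow_add ht, add_halves, Real.rpow_one]
  have hst : 0 < l * (s / t) ^ p + (1 - l) := by
    simpa using convexCombination_pos hl (Real.rpow_pos_of_pos (div_pos hs ht) p) one_pos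
  have hreal : t ^ (1 / 2 : ℝ) * (l * (s / t) ^ p + (1 - l)) ^ (1 / p) * t ^ (1 / 2 : ℝ) =
      (l * s ^ p + (1 - l) * t ^ p) ^ (1 / p) := by
    have hscale : l * s ^ p + (1 - l) * t ^ p = t ^ p * (l * (s / t) ^ p + (1 - l)) := by
      rw [Real.div_rpow hs.le ht.le]
      field_simp
    rw [mul_right_comm, hhalf, hscale, Real.mul_rpow htp.le hst.le, ← Real.rpow_mul ht.le,
      mul_one_div_cancel hp, Real.rpow_one]
  have hinner : (t • (1 : A)) ^ (-(1 / 2) : ℝ) * s • 1 * (t • 1) ^ (-(1 / 2) : ℝ) =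
      (s / t) • 1 := by
    rw [smul_one_rpow ht, ← rpow_neg_half_mul_mul_rpow_neg_half ht]
    simp only [smul_mul_assoc, mul_smul_comm, smul_smul, one_mul]
    ring_nf
  rw [powerMean, hinner, smul_one_rpow (div_pos hs ht), smul_smul, ← add_smul,
    smul_one_rpow hst, smul_one_rpow ht, ← hreal]
  simp only [smul_mul_assoc, mul_smul_comm, smul_smul, one_mul]
  ring_nf

lemma powerMeanIntegral_smul_one {p s t : ℝ} (hp : 0 < p) (hs : 0 < s) (ht : 0 < t) :
    powerMeanIntegral p (s • (1 : A)) (t • 1) =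
      ((1 / p) * ∫ l in (0 : ℝ)..1, (l * s ^ p + (1 - l) * t ^ p) ^ (1 / p - 1)) • 1 := by
  have hcongr : Set.EqOn (fun l => powerMean l p (s • (1 : A)) (t • 1) ^ (1 - p))
      (fun l => (l * s ^ p + (1 - l) * t ^ p) ^ (1 / p - 1) • 1) (Set.Icc 0 1) := fun l hl => by
    have hpos := convexCombination_pos hl (Real.rpow_pos_of_pos hs p) (Real.rpow_pos_of_pos ht p)
    have hexp : 1 / p * (1 - p) = 1 / p - 1 := by field_simp
    simp only [powerMean_smul_one hl hp.ne' hs ht, smul_one_rpow (Real.rpow_pos_of_pos hpos _),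
      ← Real.rpow_mul hpos.le, hexp]
  rw [powerMeanIntegral, setIntegral_congr_fun measurableSet_Icc hcongr, integral_smul_const,
    integral_Icc_eq_integral_Ioc, ← intervalIntegral.integral_of_le zero_le_one, smul_smul]

theorem powerMeanIntegral_smul_one_of_ne {p s t : ℝ} (hp : 0 < p) (hs : 0 < s) (ht : 0 < t)
    (hst : s ≠ t) :
    powerMeanIntegral p (s • (1 : A)) (t • 1) = ((s - t) / (s ^ p - t ^ p)) • 1 := by
  have hne : s ^ p ≠ t ^ p := (Real.rpow_left_inj hs.le ht.le hp.ne').not.2 hst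
  have hr : -1 < 1 / p - 1 := by linarith [one_div_pos.2 hp]
  rw [powerMeanIntegral_smul_one hp hs ht, integral_convexCombination_rpow hne hr, sub_add_cancel,
    ← Real.rpow_mul hs.le, ← Real.rpow_mul ht.le, mul_one_div_cancel hp.ne', Real.rpow_one,
    Real.rpow_one, ← mul_div_assoc, mul_div_mul_left _ _ (one_div_ne_zero hp.ne')]

theorem powerMeanIntegral_smul_one_self {p t : ℝ} (hp : 0 < p) (ht : 0 < t) :
    powerMeanIntegral p (t • (1 : A)) (t • 1) = ((1 / p) * t ^ (1 - p)) • 1 := by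
  have hconst (l : ℝ) : (l * t ^ p + (1 - l) * t ^ p) ^ (1 / p - 1) = t ^ (1 - p) := by
    rw [← add_mul, add_sub_cancel, one_mul, ← Real.rpow_mul ht.le]
    congr 1
    field_simp
  simp only [powerMeanIntegral_smul_one hp ht ht, hconst, intervalIntegral.integral_const, sub_zero,
    one_smul]

theorem stmt17_general {p : ℝ} (hp : p ∈ Set.Ioc 0 1) :
    ConcaveOn ℝ {x : A × A | IsStrictlyPositive x.1 ∧ IsStrictlyPositive x.2}
        (fun x => powerMeanIntegral p x.1 x.2) ∧
      (∀ s t : ℝ, 0 < s → 0 < t → s ≠ t →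
        powerMeanIntegral p (s • (1 : A)) (t • 1) = ((s - t) / (s ^ p - t ^ p)) • 1) ∧
      (∀ t : ℝ, 0 < t →
        powerMeanIntegral p (t • (1 : A)) (t • 1) = ((1 / p) * t ^ (1 - p)) • 1) :=
  ⟨concaveOn_powerMeanIntegral hp,
    fun _ _ hs ht hst => powerMeanIntegral_smul_one_of_ne hp.1 hs ht hst,
    fun _ ht => powerMeanIntegral_smul_one_self hp.1 ht⟩

end PowerMean

end CStarAlgebra

section MatrixBridge

open scoped Matrix.Norms.L2Operator MatrixOrder

variable {n : ℕ} {A B : Matrix (Fin n) (Fin n) ℂ}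

lemma mpow_eq_rpow (hA : 0 ≤ A) (q : ℝ) : mpow A q = A ^ q := by
  have hherm : A.IsHermitian := hA.isSelfAdjoint
  rw [CFC.rpow_eq_cfc_real, hherm.cfc_eq, mpow, dif_pos hherm]
  rfl

lemma persp2_eq_powerMean {l p : ℝ} (hl : l ∈ Set.Icc 0 1) (hA : A.PosDef) (hB : B.PosDef) :
    persp2 l p A B = powerMean l p A B := by
  have hX := isStrictlyPositive_rpow_conjugate hB.isStrictlyPositive hA.isStrictlyPositive
    (-(1 / 2))
  simp only [persp2, powerMean, mpow_eq_rpow hB.posSemidef.nonneg]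
  rw [mpow_eq_rpow hX.nonneg, mpow_eq_rpow (isStrictlyPositive_smul_rpow_add hl hX p).nonneg]

-- `F2map` integrates in the entrywise sup norm, the functional calculus of C⋆-algebras needs the
-- operator norm; the identity is a linear homeomorphism between the two.
lemma setIntegral_l2Operator_eq (s : Set ℝ) (f : ℝ → Matrix (Fin n) (Fin n) ℂ) :
    @integral _ _ Matrix.normedAddCommGroup Matrix.normedSpace _ (volume.restrict s) f =
      ∫ l in s, f l := by
  have hrefl := @ContinuousLinearEquiv.integral_comp_comm _ _ _ _ (volume.restrict s) ℝ _
    instL2OpNormedAddCommGroup NormedSpace.complexToReal Matrix.normedAddCommGroup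
    Matrix.normedSpace Matrix.normedSpace NormedSpace.complexToReal
    (ContinuousLinearEquiv.refl ℝ (Matrix (Fin n) (Fin n) ℂ)) f
  exact hrefl

lemma F2map_eq_powerMeanIntegral (p : ℝ) (hA : A.PosDef) (hB : B.PosDef) :
    F2map p A B = powerMeanIntegral p A B := by
  have hcongr : Set.EqOn (fun l => mpow (persp2 l p A B) (1 - p))
      (fun l => powerMean l p A B ^ (1 - p)) (Set.Icc 0 1) := fun l hl => by
    have hpos := isStrictlyPositive_powerMean hl p hA.isStrictlyPositive hB.isStrictlyPositive
    simp only [persp2_eq_powerMean hl hA hB, mpow_eq_rpow hpos.nonneg]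
  rw [F2map, powerMeanIntegral, setIntegral_l2Operator_eq,
    setIntegral_congr_fun measurableSet_Icc hcongr]

lemma concaveOn_F2map {p : ℝ} (hp : p ∈ Set.Ioc 0 1) :
    ConcaveOn ℝ {x : Matrix (Fin n) (Fin n) ℂ × Matrix (Fin n) (Fin n) ℂ | x.1.PosDef ∧ x.2.PosDef}
      (fun x => F2map p x.1 x.2) := by
  have hgen := (stmt17_general (A := Matrix (Fin n) (Fin n) ℂ) hp).1
  simp only [isStrictlyPositive_iff_posDef] at hgen
  exact hgen.congr fun x hx => (F2map_eq_powerMeanIntegral p hx.1 hx.2).symm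

lemma F2map_smul_one_of_ne {p : ℝ} (hp : p ∈ Set.Ioc 0 1) {s t : ℝ} (hs : 0 < s) (ht : 0 < t)
    (hst : s ≠ t) :
    F2map p (s • (1 : Matrix (Fin n) (Fin n) ℂ)) (t • 1) = ((s - t) / (s ^ p - t ^ p)) • 1 :=
  (F2map_eq_powerMeanIntegral p (PosDef.one.smul hs) (PosDef.one.smul ht)).trans
    ((stmt17_general hp).2.1 s t hs ht hst)

lemma F2map_smul_one_self {p : ℝ} (hp : p ∈ Set.Ioc 0 1) {t : ℝ} (ht : 0 < t) :
    F2map p (t • (1 : Matrix (Fin n) (Fin n) ℂ)) (t • 1) = ((1 / p) * t ^ (1 - p)) • 1 :=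
  (F2map_eq_powerMeanIntegral p (PosDef.one.smul ht) (PosDef.one.smul ht)).trans
    ((stmt17_general hp).2.2 t ht)

end MatrixBridge

theorem stmt17 (p : ℝ) (hp0 : 0 < p) (hp1 : p ≤ 1) :
    (∀ (n : ℕ) (A₁ A₂ B₁ B₂ : Matrix (Fin n) (Fin n) ℂ),
      A₁.PosDef → A₂.PosDef → B₁.PosDef → B₂.PosDef →
      ∀ α : ℝ, 0 ≤ α → α ≤ 1 →
      (F2map p (α • A₁ + (1 - α) • A₂) (α • B₁ + (1 - α) • B₂) -
        (α • F2map p A₁ B₁ + (1 - α) • F2map p A₂ B₂)).PosSemidef) ∧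
    (∀ s t : ℝ, 0 < s → 0 < t → s ≠ t →
      F2map p (s • (1 : Matrix (Fin 1) (Fin 1) ℂ)) (t • 1) =
        ((s - t) / (s ^ p - t ^ p)) • 1) ∧
    (∀ t : ℝ, 0 < t →
      F2map p (t • (1 : Matrix (Fin 1) (Fin 1) ℂ)) (t • 1) =
        ((1 / p) * t ^ (1 - p)) • 1) := by
  have hp : p ∈ Set.Ioc 0 1 := ⟨hp0, hp1⟩
  exact ⟨fun n A₁ A₂ B₁ B₂ hA₁ hA₂ hB₁ hB₂ α hα0 hα1 => Matrix.le_iff.1 <|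
    (concaveOn_F2map hp).2 (x := (A₁, B₁)) (y := (A₂, B₂)) ⟨hA₁, hB₁⟩ ⟨hA₂, hB₂⟩
      hα0 (sub_nonneg.2 hα1) (add_sub_cancel _ _),
    fun _ _ hs ht hst => F2map_smul_one_of_ne hp hs ht hst, fun _ ht => F2map_smul_one_self hp ht⟩
end

section
/- Let 0 < p ≤ 1. Define on triples of n×n positive definite complex matrices the map P(A, B, C) = (1/p) C^{1/2} ∫₀¹ { (C^{-1/2}BC^{-1/2})^{1/2} [ λ((C^{-1/2}BC^{-1/2})^{-1/2}(C^{-1/2}AC^{-1/2})(C^{-1/2}BC^{-1/2})^{-1/2})^p + (1-λ)I ]^{1/p} (C^{-1/2}BC^{-1/2})^{1/2} }^{1-p} dλ · C^{1/2}. Then P is jointly concave in the Loewner order, and for positive real scalars (t₁, t₂, t₃) with t₁ ≠ t₂ (i.e., 1×1 matrices) its value is ((t₁ − t₂)/(t₁^p − t₂^p))·t₃^p, while for t₁ = t₂ it is (1/p)t₁^{1-p}t₃^p. Thus the function F₃(t₁,t₂,t₃) = ((t₁−t₂)/(t₁^p−t₂^p))t₃^p extends to a jointly concave map on triples of positive definite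 matrices. -/
open Matrix MeasureTheory
open scoped ComplexOrder

attribute [local instance] Matrix.normedAddCommGroup Matrix.normedSpace

/-- `P(A,B,C) = (1/p) C^{1/2} ∫₀¹ {(C^{-1/2}BC^{-1/2})^{1/2}
[λ((C^{-1/2}BC^{-1/2})^{-1/2}(C^{-1/2}AC^{-1/2})(C^{-1/2}BC^{-1/2})^{-1/2})^p + (1-λ)I]^{1/p}
(C^{-1/2}BC^{-1/2})^{1/2}}^{1-p} dλ C^{1/2}`. -/
noncomputable def Pmap {n : ℕ} (p : ℝ) (A B C : Matrix (Fin n) (Fin n) ℂ) :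
    Matrix (Fin n) (Fin n) ℂ :=
  (1 / p) •
    (mpow C (1 / 2) *
      (∫ l in Set.Icc (0 : ℝ) 1,
        mpow
          (mpow (mpow C (-(1 / 2)) * B * mpow C (-(1 / 2))) (1 / 2) *
            mpow
              (l • mpow
                  (mpow (mpow C (-(1 / 2)) * B * mpow C (-(1 / 2))) (-(1 / 2)) *
                    (mpow C (-(1 / 2)) * A * mpow C (-(1 / 2))) *
                      mpow (mpow C (-(1 / 2)) * B * mpow C (-(1 / 2))) (-(1 / 2))) p +
                (1 - l) • 1)
              (1 / p) *
            mpow (mpow C (-(1 / 2)) * B * mpow C (-(1 / 2))) (1 / 2))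
          (1 - p)) *
      mpow C (1 / 2))

/-!
By congruence invariance, `P(A, B, C) = (1/p) ∫₀¹ C #_{1-p} M_l(A, B) dl`, where `#_r` is the
weighted geometric mean and `M_l(A, B)` is the perspective of `x ↦ (l x ^ p + 1 - l) ^ (1/p)`.

The geometric mean is monotone, and jointly concave as an integral of perspectives of
`x ↦ x / (s + x)`, whose concavity reduces to the joint convexity of `(Y, Z) ↦ Y* Z⁻¹ Y`. Now `1/p`
is the sum of the series `∑ (1 - p) ^ i`, and the perspective of
`x ↦ (l x ^ p + 1 - l) ^ (1 + (1 - p) θ)` is `l A #_{1-p} M + (1 - l) B #_{1-p} M`, where `M` is the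
perspective of `x ↦ (l x ^ p + 1 - l) ^ θ`. Joint concavity thus propagates along the partial sums,
and passes to their limit `M_l(A, B)`, to `C #_{1-p} M_l(A, B)` and to the integral over `l`.
-/

namespace OperatorMean

open Set Filter Topology
open scoped Ring

section CStarAlgebra

variable {A : Type*} [CStarAlgebra A] [PartialOrder A] [StarOrderedRing A]

lemma convex_setOf_isStrictlyPositive : Convex ℝ {a : A | IsStrictlyPositive a} := by
  grind [convex_iff_forall_pos]

lemma star_mul_add_star_mul_sub_le_star_mul_inverse_mul {Z : A} (hZ : IsStrictlyPositive Z)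
    (Y W : A) :
    star W * Y + star Y * W - star W * Z * W ≤ star Y * Z⁻¹ʳ * Y := by
  have square : star (Y - Z * W) * Z⁻¹ʳ * (Y - Z * W) =
      star Y * Z⁻¹ʳ * Y - (star W * Y + star Y * W - star W * Z * W) := by
    simp only [star_sub, star_mul, hZ.isSelfAdjoint.star_eq, sub_mul, mul_sub, mul_assoc,
      Ring.inverse_mul_cancel_left _ _ hZ.isUnit, Ring.mul_inverse_cancel_left _ _ hZ.isUnit]
    abel
  rw [← sub_nonneg, ← square]
  exact star_left_conjugate_nonneg hZ.ringInverse.nonneg _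

lemma convexOn_star_mul_inverse_mul :
    ConvexOn ℝ (univ ×ˢ {Z : A | IsStrictlyPositive Z})
      (fun Q : A × A => star Q.1 * Q.2⁻¹ʳ * Q.1) := by
  refine ⟨convex_univ.prod convex_setOf_isStrictlyPositive, ?_⟩
  rintro ⟨Y₁, Z₁⟩ ⟨-, hZ₁ : IsStrictlyPositive Z₁⟩ ⟨Y₂, Z₂⟩ ⟨-, hZ₂ : IsStrictlyPositive Z₂⟩
    a b ha hb hab
  change star (a • Y₁ + b • Y₂) * (a • Z₁ + b • Z₂)⁻¹ʳ * (a • Y₁ + b • Y₂) ≤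
    a • (star Y₁ * Z₁⁻¹ʳ * Y₁) + b • (star Y₂ * Z₂⁻¹ʳ * Y₂)
  have hZ : IsStrictlyPositive (a • Z₁ + b • Z₂) :=
    convex_setOf_isStrictlyPositive hZ₁ hZ₂ ha hb hab
  -- At this `W` the lower bound, which is affine in `(Y, Z)`, is attained.
  set W := (a • Z₁ + b • Z₂)⁻¹ʳ * (a • Y₁ + b • Y₂)
  calc star (a • Y₁ + b • Y₂) * (a • Z₁ + b • Z₂)⁻¹ʳ * (a • Y₁ + b • Y₂)
      = star W * (a • Y₁ + b • Y₂) + star (a • Y₁ + b • Y₂) * W -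
          star W * (a • Z₁ + b • Z₂) * W := by
        rw [mul_assoc (star W), Ring.mul_inverse_cancel_left _ _ hZ.isUnit, add_sub_cancel_left,
          mul_assoc]
    _ = a • (star W * Y₁ + star Y₁ * W - star W * Z₁ * W) +
          b • (star W * Y₂ + star Y₂ * W - star W * Z₂ * W) := by
        simp only [smul_sub, smul_add, star_add, star_smul, star_trivial, mul_add, add_mul,
          mul_smul_comm, smul_mul_assoc]
        abel
    _ ≤ _ := by
        gcongr <;> exact star_mul_add_star_mul_sub_le_star_mul_inverse_mul ‹_› _ _

/-- The noncommutative perspective `X^{1/2} f(X^{-1/2} Y X^{-1/2}) X^{1/2}` of `f`, the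
noncommutative analogue of `x * f (y / x)`. -/
noncomputable def perspective (f : ℝ → ℝ) (X Y : A) : A :=
  X ^ (1 / 2 : ℝ) * cfc f (X ^ (-(1 / 2) : ℝ) * Y * X ^ (-(1 / 2) : ℝ)) * X ^ (1 / 2 : ℝ)

section Perspective

variable {f g : ℝ → ℝ} {X Y : A}

lemma rpow_half_mul_rpow_half (hX : IsStrictlyPositive X) :
    X ^ (1 / 2 : ℝ) * X ^ (1 / 2 : ℝ) = X := by
  rw [← CFC.rpow_add hX.isUnit, add_halves, CFC.rpow_one X hX.nonneg]

lemma isSelfAdjoint_rpow (X : A) (q : ℝ) : IsSelfAdjoint (X ^ q) :=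
  CFC.rpow_nonneg.isSelfAdjoint

lemma isStrictlyPositive_rpow_mul_mul_rpow (hX : IsStrictlyPositive X)
    (hY : IsStrictlyPositive Y) (q : ℝ) : IsStrictlyPositive (X ^ q * Y * X ^ q) := by
  have h := (IsStrictlyPositive.rpow X q).isUnit.isStrictlyPositive_star_left_conjugate_iff.2 hY
  rwa [(isSelfAdjoint_rpow X q).star_eq] at h

lemma rpow_mul_mul_rpow_cancel (hX : IsStrictlyPositive X) (q : ℝ) (Y : A) :
    X ^ q * (X ^ (-q) * Y * X ^ (-q)) * X ^ q = Y := by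
  rw [mul_assoc, mul_assoc _ _ (X ^ q), CFC.rpow_neg_mul_rpow _ hX, mul_one, ← mul_assoc,
    CFC.rpow_mul_rpow_neg _ hX, one_mul]

lemma isStrictlyPositive_cfc (hX : IsStrictlyPositive X) (hf : ContinuousOn f (Ioi 0))
    (hf0 : ∀ x, 0 < x → 0 < f x) : IsStrictlyPositive (cfc f X) :=
  (cfc_isStrictlyPositive_iff f X (hf.mono fun _ => hX.spectrum_pos)).2
    fun x hx => hf0 x (hX.spectrum_pos hx)

lemma isStrictlyPositive_perspective (hX : IsStrictlyPositive X) (hY : IsStrictlyPositive Y)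
    (hf : ContinuousOn f (Ioi 0)) (hf0 : ∀ x, 0 < x → 0 < f x) :
    IsStrictlyPositive (perspective f X Y) :=
  isStrictlyPositive_rpow_mul_mul_rpow hX
    (isStrictlyPositive_cfc (isStrictlyPositive_rpow_mul_mul_rpow hX hY _) hf hf0) _

lemma perspective_congr (hX : IsStrictlyPositive X) (hY : IsStrictlyPositive Y)
    (h : EqOn f g (Ioi 0)) : perspective f X Y = perspective g X Y := by
  rw [perspective, cfc_congr (h.mono fun x hx =>
    (isStrictlyPositive_rpow_mul_mul_rpow hX hY _).spectrum_pos hx)]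
  rfl

lemma perspective_one (hX : IsStrictlyPositive X) (hY : IsStrictlyPositive Y) :
    perspective (fun _ => 1) X Y = X := by
  rw [perspective, cfc_const_one ℝ _ (isStrictlyPositive_rpow_mul_mul_rpow hX hY _).isSelfAdjoint,
    mul_one, rpow_half_mul_rpow_half hX]

lemma perspective_id (hX : IsStrictlyPositive X) (hY : IsStrictlyPositive Y) :
    perspective (fun x => x) X Y = Y := by
  rw [perspective, cfc_id' ℝ _ (isStrictlyPositive_rpow_mul_mul_rpow hX hY _).isSelfAdjoint,
    rpow_mul_mul_rpow_cancel hX]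

lemma perspective_add (hX : IsStrictlyPositive X) (hY : IsStrictlyPositive Y)
    (hf : ContinuousOn f (Ioi 0)) (hg : ContinuousOn g (Ioi 0)) :
    perspective (fun x => f x + g x) X Y = perspective f X Y + perspective g X Y := by
  have hW := isStrictlyPositive_rpow_mul_mul_rpow hX hY (-(1 / 2))
  rw [perspective, cfc_add _ f g (hf.mono fun x hx => hW.spectrum_pos hx)
    (hg.mono fun x hx => hW.spectrum_pos hx), mul_add, add_mul]
  rfl

lemma perspective_const_mul (hX : IsStrictlyPositive X) (hY : IsStrictlyPositive Y)
    (hf : ContinuousOn f (Ioi 0)) (c : ℝ) :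
    perspective (fun x => c * f x) X Y = c • perspective f X Y := by
  have hW := isStrictlyPositive_rpow_mul_mul_rpow hX hY (-(1 / 2))
  rw [perspective, cfc_const_mul c f _ (hf.mono fun x hx => hW.spectrum_pos hx),
    mul_smul_comm, smul_mul_assoc]
  rfl

lemma cfc_star_mul_mul_of_mem_unitary {a U : A} (ha : IsSelfAdjoint a)
    (hf : ContinuousOn f (spectrum ℝ a)) (hU : U ∈ unitary A) :
    cfc f (star U * a * U) = star U * cfc f a * U := by
  have hφ : Continuous (Unitary.conjStarAlgAut ℂ A (star ⟨U, hU⟩)) :=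
    show Continuous fun x : A => star U * x * star (star U) by fun_prop
  have h := StarAlgHomClass.map_cfc (Unitary.conjStarAlgAut ℂ A (star ⟨U, hU⟩)) f a hf hφ ha
    (ha.map _)
  simpa only [Unitary.conjStarAlgAut_star_apply] using h.symm

lemma rpow_half_mul_mul_rpow_neg_half_mem_unitary (hX : IsStrictlyPositive X) {K : A}
    (hK : IsUnit K) :
    X ^ (1 / 2 : ℝ) * K * (star K * X * K) ^ (-(1 / 2) : ℝ) ∈ unitary A := by
  set X' := star K * X * K with hX'_def
  have hX' : IsStrictlyPositive X' := hK.isStrictlyPositive_star_left_conjugate_iff.2 hX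
  refine IsUnit.mem_unitary_of_star_mul_self (((IsStrictlyPositive.rpow X _).isUnit.mul hK).mul
    (IsStrictlyPositive.rpow X' _).isUnit) ?_
  calc star (X ^ (1 / 2 : ℝ) * K * X' ^ (-(1 / 2) : ℝ)) *
        (X ^ (1 / 2 : ℝ) * K * X' ^ (-(1 / 2) : ℝ))
      = X' ^ (-(1 / 2) : ℝ) * (star K * (X ^ (1 / 2 : ℝ) * X ^ (1 / 2 : ℝ)) * K) *
          X' ^ (-(1 / 2) : ℝ) := by
        simp only [star_mul, (isSelfAdjoint_rpow _ _).star_eq, mul_assoc]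
    _ = X' ^ (-(1 / 2) : ℝ) * (X' ^ (1 / 2 : ℝ) * X' ^ (1 / 2 : ℝ)) * X' ^ (-(1 / 2) : ℝ) := by
        rw [rpow_half_mul_rpow_half hX, ← hX'_def, rpow_half_mul_rpow_half hX']
    _ = 1 := by
        rw [← mul_assoc, CFC.rpow_neg_mul_rpow _ hX', one_mul, CFC.rpow_mul_rpow_neg _ hX']

lemma perspective_congruence (hX : IsStrictlyPositive X) (hY : IsStrictlyPositive Y)
    (hf : ContinuousOn f (Ioi 0)) {K : A} (hK : IsUnit K) :
    perspective f (star K * X * K) (star K * Y * K) = star K * perspective f X Y * K := by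
  have hX' : IsStrictlyPositive (star K * X * K) :=
    hK.isStrictlyPositive_star_left_conjugate_iff.2 hX
  have hW := isStrictlyPositive_rpow_mul_mul_rpow hX hY (-(1 / 2))
  set X' := star K * X * K
  set W := X ^ (-(1 / 2) : ℝ) * Y * X ^ (-(1 / 2) : ℝ)
  set U := X ^ (1 / 2 : ℝ) * K * X' ^ (-(1 / 2) : ℝ)
  have hU_mul : U * X' ^ (1 / 2 : ℝ) = X ^ (1 / 2 : ℝ) * K := by
    rw [mul_assoc, CFC.rpow_neg_mul_rpow _ hX', mul_one]
  have star_U : star U = X' ^ (-(1 / 2) : ℝ) * star K * X ^ (1 / 2 : ℝ) := by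
    simp only [U, star_mul, (isSelfAdjoint_rpow _ _).star_eq, mul_assoc]
  have hU : U ∈ unitary A := rpow_half_mul_mul_rpow_neg_half_mem_unitary hX hK
  have conj_eq : X' ^ (-(1 / 2) : ℝ) * (star K * Y * K) * X' ^ (-(1 / 2) : ℝ) =
      star U * W * U := by
    nth_rw 1 [← rpow_mul_mul_rpow_cancel hX (1 / 2) Y, star_U]
    simp only [U, W, mul_assoc]
  calc perspective f X' (star K * Y * K)
      = star (U * X' ^ (1 / 2 : ℝ)) * cfc f W * (U * X' ^ (1 / 2 : ℝ)) := by
        rw [perspective, conj_eq, cfc_star_mul_mul_of_mem_unitary hW.isSelfAdjoint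
          (hf.mono fun _ => hW.spectrum_pos) hU, star_mul U, (isSelfAdjoint_rpow _ _).star_eq]
        simp only [mul_assoc]
    _ = star K * perspective f X Y * K := by
        rw [hU_mul, star_mul, (isSelfAdjoint_rpow _ _).star_eq, perspective]
        simp only [W, mul_assoc]

lemma cfc_rpow_mul_cfc_mul_cfc_rpow (hf : ContinuousOn f (spectrum ℝ X))
    (hf0 : ∀ x ∈ spectrum ℝ X, 0 < f x) (hg : ContinuousOn g (spectrum ℝ X))
    (hX : IsSelfAdjoint X) (q : ℝ) :
    cfc f X ^ q * cfc g X * cfc f X ^ q = cfc (fun x => f x ^ (q + q) * g x) X := by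
  have hfq : ContinuousOn (fun x => f x ^ q) (spectrum ℝ X) :=
    hf.rpow_const fun x hx => .inl (hf0 x hx).ne'
  rw [CFC.cfc_rpow hf0 hf, ← cfc_mul _ g X hfq hg,
    ← cfc_mul (fun x => f x ^ q * g x) _ X (hfq.mul hg) hfq]
  refine cfc_congr fun x hx => ?_
  rw [mul_right_comm, ← Real.rpow_add (hf0 x hx)]

lemma perspective_cfc_cfc {h : ℝ → ℝ} (hX : IsStrictlyPositive X)
    (hf : ContinuousOn f (Ioi 0)) (hf0 : ∀ x, 0 < x → 0 < f x)
    (hg : ContinuousOn g (Ioi 0)) (hg0 : ∀ x, 0 < x → 0 < g x) (hh : ContinuousOn h (Ioi 0)) :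
    perspective h (cfc f X) (cfc g X) = cfc (fun x => f x * h (g x / f x)) X := by
  have pos {x : ℝ} (hx : x ∈ spectrum ℝ X) : 0 < x := hX.spectrum_pos hx
  have hfX : ContinuousOn f (spectrum ℝ X) := hf.mono fun _ => pos
  have hgX : ContinuousOn g (spectrum ℝ X) := hg.mono fun _ => pos
  have hfX0 (x) (hx : x ∈ spectrum ℝ X) : 0 < f x := hf0 x (pos hx)
  have hdiv : ContinuousOn (fun x => g x / f x) (spectrum ℝ X) :=
    hgX.div hfX fun x hx => (hfX0 x hx).ne'
  have hdiv_pos : MapsTo (fun x => g x / f x) (spectrum ℝ X) (Ioi 0) :=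
    fun x hx => div_pos (hg0 x (pos hx)) (hfX0 x hx)
  have relative : cfc f X ^ (-(1 / 2) : ℝ) * cfc g X * cfc f X ^ (-(1 / 2) : ℝ) =
      cfc (fun x => g x / f x) X := by
    rw [cfc_rpow_mul_cfc_mul_cfc_rpow hfX hfX0 hgX hX.isSelfAdjoint, ← neg_add, add_halves]
    simp only [Real.rpow_neg_one, inv_mul_eq_div]
  rw [perspective, relative, ← cfc_comp' h _ X (hh.mono hdiv_pos.image_subset) hdiv,
    cfc_rpow_mul_cfc_mul_cfc_rpow (g := fun x => h (g x / f x)) hfX hfX0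
      (hh.comp hdiv hdiv_pos) hX.isSelfAdjoint, add_halves]
  simp only [Real.rpow_one]

lemma perspective_perspective {h : ℝ → ℝ} (hX : IsStrictlyPositive X) (hY : IsStrictlyPositive Y)
    (hf : ContinuousOn f (Ioi 0)) (hf0 : ∀ x, 0 < x → 0 < f x)
    (hg : ContinuousOn g (Ioi 0)) (hg0 : ∀ x, 0 < x → 0 < g x) (hh : ContinuousOn h (Ioi 0)) :
    perspective h (perspective f X Y) (perspective g X Y) =
      perspective (fun x => f x * h (g x / f x)) X Y := by
  have hW := isStrictlyPositive_rpow_mul_mul_rpow hX hY (-(1 / 2))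
  have h_half := perspective_congruence (isStrictlyPositive_cfc hW hf hf0)
    (isStrictlyPositive_cfc hW hg hg0) hh (IsStrictlyPositive.rpow X (1 / 2)).isUnit
  rw [(isSelfAdjoint_rpow X _).star_eq, perspective_cfc_cfc hW hf hf0 hg hg0 hh] at h_half
  exact h_half

lemma perspective_inv (hX : IsStrictlyPositive X) (hY : IsStrictlyPositive Y)
    (hf : ContinuousOn f (Ioi 0)) (hf0 : ∀ x, 0 < x → 0 < f x) :
    perspective (fun x => (f x)⁻¹) X Y = X * (perspective f X Y)⁻¹ʳ * X := by
  have hW := isStrictlyPositive_rpow_mul_mul_rpow hX hY (-(1 / 2))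
  obtain ⟨R, hR⟩ := (IsStrictlyPositive.rpow X (1 / 2)).isUnit
  obtain ⟨D, hD⟩ := (isStrictlyPositive_cfc hW hf hf0).isUnit
  have hRR : X = R * R := by rw [hR, rpow_half_mul_rpow_half hX]
  have inverse_eq : (R * D * R : A)⁻¹ʳ = ↑(R * D * R)⁻¹ := Ring.inverse_unit (R * D * R)
  rw [perspective, perspective, cfc_inv f _ (fun x hx => (hf0 x (hW.spectrum_pos hx)).ne')
    (hf.mono fun _ => hW.spectrum_pos) hW.isSelfAdjoint, ← hD, ← hR, Ring.inverse_unit,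
    inverse_eq, hRR]
  norm_cast
  group

lemma perspective_rpowIntegrand₀₁ {q s : ℝ} (hq : q ∈ Ioo 0 1) (hs : 0 < s)
    (hX : IsStrictlyPositive X) (hY : IsStrictlyPositive Y) :
    perspective (Real.rpowIntegrand₀₁ q s) X Y =
      s ^ (q - 1) • X - s ^ q • (X * (s • X + Y)⁻¹ʳ * X) := by
  have hadd : ContinuousOn (fun x : ℝ => s * 1 + x) (Ioi 0) := by fun_prop
  have hadd_pos (x : ℝ) (hx : 0 < x) : 0 < s * 1 + x := by positivity
  have hadd_inv : ContinuousOn (fun x : ℝ => (s * 1 + x)⁻¹) (Ioi 0) :=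
    hadd.inv₀ fun x hx => (hadd_pos x hx).ne'
  have perspective_affine : perspective (fun x => s * 1 + x) X Y = s • X + Y := by
    rw [perspective_add (f := fun _ => s * 1) (g := fun x => x) hX hY (by fun_prop) (by fun_prop),
      perspective_const_mul hX hY (by fun_prop), perspective_one hX hY, perspective_id hX hY]
  calc perspective (Real.rpowIntegrand₀₁ q s) X Y
      = perspective (fun x => s ^ (q - 1) * 1 + -s ^ q * (s * 1 + x)⁻¹) X Y := by
        refine perspective_congr hX hY fun x _ => ?_
        rw [Real.rpowIntegrand₀₁_eq_sub hq.2.ne hs]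
        ring
    _ = s ^ (q - 1) • X - s ^ q • (X * (s • X + Y)⁻¹ʳ * X) := by
        rw [perspective_add (f := fun _ => s ^ (q - 1) * 1)
            (g := fun x => -s ^ q * (s * 1 + x)⁻¹) hX hY (by fun_prop) (hadd_inv.const_mul _),
          perspective_const_mul hX hY (by fun_prop), perspective_one hX hY,
          perspective_const_mul hX hY hadd_inv, perspective_inv hX hY hadd hadd_pos,
          perspective_affine, neg_smul, ← sub_eq_add_neg]

end Perspective

lemma concaveOn_perspective_rpowIntegrand₀₁ {q s : ℝ} (hq : q ∈ Ioo 0 1) (hs : 0 < s) :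
    ConcaveOn ℝ ({X : A | IsStrictlyPositive X} ×ˢ {Y : A | IsStrictlyPositive Y})
      (fun Q => perspective (Real.rpowIntegrand₀₁ q s) Q.1 Q.2) := by
  have hconv := convex_setOf_isStrictlyPositive (A := A) |>.prod
    (convex_setOf_isStrictlyPositive (A := A))
  let L : A × A →ₗ[ℝ] A × A :=
    (LinearMap.fst ℝ A A).prod (s • LinearMap.fst ℝ A A + LinearMap.snd ℝ A A)
  have hfrac := ((convexOn_star_mul_inverse_mul (A := A)).comp_linearMap L).subset
    (s := {X : A | IsStrictlyPositive X} ×ˢ {Y : A | IsStrictlyPositive Y})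
    (fun Q hQ => ⟨mem_univ Q.1, (IsStrictlyPositive.smul hs hQ.1).add_nonneg hQ.2.nonneg⟩) hconv
  have hlin : ConcaveOn ℝ ({X : A | IsStrictlyPositive X} ×ˢ {Y : A | IsStrictlyPositive Y})
      (s ^ (q - 1) • LinearMap.fst ℝ A A) := LinearMap.concaveOn _ hconv
  refine (hlin.sub (hfrac.smul (Real.rpow_nonneg hs.le q))).congr ?_
  rintro ⟨X, Y⟩ ⟨hX : IsStrictlyPositive X, hY : IsStrictlyPositive Y⟩
  simp [L, perspective_rpowIntegrand₀₁ hq hs hX hY, hX.isSelfAdjoint.star_eq]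

/-- The weighted geometric mean `X #_t Y` of Kubo and Ando, the perspective of `x ↦ x ^ t`. -/
noncomputable def geomMean (t : ℝ) (X Y : A) : A := perspective (· ^ t) X Y

section GeomMean

variable {t : ℝ} {X Y Z : A}

lemma continuousOn_rpow_const_Ioi (t : ℝ) : ContinuousOn (fun x : ℝ => x ^ t) (Ioi 0) :=
  continuousOn_id.rpow_const fun x (hx : 0 < x) => .inl hx.ne'

lemma geomMean_eq_rpow (hX : IsStrictlyPositive X) (hY : IsStrictlyPositive Y) :
    geomMean t X Y = X ^ (1 / 2 : ℝ) *
      (X ^ (-(1 / 2) : ℝ) * Y * X ^ (-(1 / 2) : ℝ)) ^ t * X ^ (1 / 2 : ℝ) := by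
  rw [geomMean, perspective,
    CFC.rpow_eq_cfc_real (isStrictlyPositive_rpow_mul_mul_rpow hX hY _).nonneg]

lemma geomMean_fst_perspective {g : ℝ → ℝ} (hX : IsStrictlyPositive X)
    (hY : IsStrictlyPositive Y) (hg : ContinuousOn g (Ioi 0)) (hg0 : ∀ x, 0 < x → 0 < g x) :
    geomMean t X (perspective g X Y) = perspective (fun x => g x ^ t) X Y := by
  have h := perspective_perspective hX hY continuousOn_const (fun _ _ => one_pos) hg hg0
    (continuousOn_rpow_const_Ioi t)
  rw [perspective_one hX hY] at h
  simp only [one_mul, div_one] at h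
  exact h

lemma geomMean_snd_perspective {g : ℝ → ℝ} (hX : IsStrictlyPositive X)
    (hY : IsStrictlyPositive Y) (hg : ContinuousOn g (Ioi 0)) (hg0 : ∀ x, 0 < x → 0 < g x) :
    geomMean t Y (perspective g X Y) = perspective (fun x => x * (g x / x) ^ t) X Y := by
  have h := perspective_perspective hX hY (continuousOn_id' _) (fun _ hx => hx) hg hg0
    (continuousOn_rpow_const_Ioi t)
  rwa [perspective_id hX hY] at h

lemma geomMean_mono_right (ht : t ∈ Icc 0 1) (hX : IsStrictlyPositive X)
    (hY : IsStrictlyPositive Y) (h : Y ≤ Z) : geomMean t X Y ≤ geomMean t X Z := by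
  rw [geomMean_eq_rpow hX hY, geomMean_eq_rpow hX (hY.of_le h)]
  exact (isSelfAdjoint_rpow X _).conjugate_le_conjugate (CFC.rpow_le_rpow ht
    ((isSelfAdjoint_rpow X _).conjugate_le_conjugate h))

lemma exists_measure_geomMean_eq_integral (ht : t ∈ Ioo 0 1) :
    ∃ μ : Measure ℝ, ∀ X Y : A, IsStrictlyPositive X → IsStrictlyPositive Y →
      IntegrableOn (fun s => perspective (Real.rpowIntegrand₀₁ t s) X Y) (Ioi 0) μ ∧
      geomMean t X Y = ∫ s in Ioi 0, perspective (Real.rpowIntegrand₀₁ t s) X Y ∂μ := by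
  lift t to NNReal using ht.1.le
  obtain ⟨μ, hμ⟩ := CFC.exists_measure_nnrpow_eq_integral_cfcₙ_rpowIntegrand₀₁ A (p := t)
    (by exact_mod_cast ht)
  refine ⟨μ, fun X Y hX hY => ?_⟩
  have hW := isStrictlyPositive_rpow_mul_mul_rpow hX hY (-(1 / 2))
  set W := X ^ (-(1 / 2) : ℝ) * Y * X ^ (-(1 / 2) : ℝ)
  let conj : A →L[ℝ] A := ContinuousLinearMap.mulLeftRight ℝ A (X ^ (1 / 2 : ℝ)) (X ^ (1 / 2 : ℝ))
  obtain ⟨hint, heq⟩ := hμ W hW.nonneg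
  have integrand_eq : EqOn (fun s => conj (cfcₙ (Real.rpowIntegrand₀₁ t s) W))
      (fun s => perspective (Real.rpowIntegrand₀₁ t s) X Y) (Ioi 0) := fun s hs => by
    dsimp only
    rw [cfcₙ_eq_cfc (hf := (Real.continuousOn_rpowIntegrand₀₁_Ici ht hs).mono (by grind))
      (hf0 := by simp)]
    rfl
  refine ⟨(conj.integrable_comp hint).congr
    ((ae_restrict_mem measurableSet_Ioi).mono integrand_eq), ?_⟩
  rw [← setIntegral_congr_fun measurableSet_Ioi integrand_eq, conj.integral_comp_comm hint, ← heq,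
    CFC.nnrpow_eq_rpow (by exact_mod_cast ht.1), geomMean_eq_rpow hX hY]
  rfl

lemma concaveOn_geomMean (ht : t ∈ Icc 0 1) :
    ConcaveOn ℝ ({X : A | IsStrictlyPositive X} ×ˢ {Y : A | IsStrictlyPositive Y})
      (fun Q => geomMean t Q.1 Q.2) := by
  have hconv := convex_setOf_isStrictlyPositive (A := A) |>.prod
    (convex_setOf_isStrictlyPositive (A := A))
  rcases ht.1.eq_or_lt with rfl | ht0
  · refine ((LinearMap.fst ℝ A A).concaveOn hconv).congr fun Q hQ => ?_
    simp [geomMean, perspective_one hQ.1 hQ.2]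
  rcases ht.2.eq_or_lt with rfl | ht1
  · refine ((LinearMap.snd ℝ A A).concaveOn hconv).congr fun Q hQ => ?_
    simp [geomMean, perspective_id hQ.1 hQ.2]
  obtain ⟨μ, hμ⟩ := exists_measure_geomMean_eq_integral (A := A) ⟨ht0, ht1⟩
  refine (integral_concaveOn_of_integrand_ae hconv ?_ fun Q hQ => (hμ Q.1 Q.2 hQ.1 hQ.2).1).congr
    fun Q hQ => (hμ Q.1 Q.2 hQ.1 hQ.2).2.symm
  filter_upwards [ae_restrict_mem measurableSet_Ioi] with s hs
  exact concaveOn_perspective_rpowIntegrand₀₁ ⟨ht0, ht1⟩ hs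

lemma concaveOn_geomMean_comp {E : Type*} [AddCommGroup E] [Module ℝ E] {s : Set E}
    {F : E →ₗ[ℝ] A} {G : E → A} (ht : t ∈ Icc 0 1) (hF : ∀ z ∈ s, IsStrictlyPositive (F z))
    (hG : ConcaveOn ℝ s G) (hG_pos : ∀ z ∈ s, IsStrictlyPositive (G z)) :
    ConcaveOn ℝ s (fun z => geomMean t (F z) (G z)) := by
  refine ⟨hG.1, fun x hx y hy a b ha hb hab => ?_⟩
  have hcomb := convex_setOf_isStrictlyPositive (hG_pos x hx) (hG_pos y hy) ha hb hab
  calc a • geomMean t (F x) (G x) + b • geomMean t (F y) (G y)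
      ≤ geomMean t (a • F x + b • F y) (a • G x + b • G y) :=
        (concaveOn_geomMean ht).2 (x := (F x, G x)) ⟨hF x hx, hG_pos x hx⟩ (y := (F y, G y))
          ⟨hF y hy, hG_pos y hy⟩ ha hb hab
    _ = geomMean t (F (a • x + b • y)) (a • G x + b • G y) := by
        rw [map_add, map_smul, map_smul]
    _ ≤ geomMean t (F (a • x + b • y)) (G (a • x + b • y)) :=
        geomMean_mono_right ht (hF _ (hG.1 hx hy ha hb hab)) hcomb
          (hG.2 hx hy ha hb hab)

end GeomMean

section PowerMean

variable {p l θ : ℝ} {X Y : A}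

lemma affine_rpow_pos (hl : l ∈ Icc 0 1) {x : ℝ} (hx : 0 < x) : 0 < l * x ^ p + (1 - l) := by
  have := Real.rpow_pos_of_pos hx p
  rcases hl.1.eq_or_lt with rfl | hl0
  · simp
  · have := sub_nonneg.2 hl.2
    positivity

lemma continuousOn_affine_rpow_rpow (hl : l ∈ Icc 0 1) (θ : ℝ) :
    ContinuousOn (fun x : ℝ => (l * x ^ p + (1 - l)) ^ θ) (Ioi 0) :=
  (((continuousOn_rpow_const_Ioi p).const_mul l).add_const _).rpow_const
    fun _ hx => .inl (affine_rpow_pos hl hx).ne'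

/-- The power mean of exponent `p` with weight `l` on `X` and `1 - l` on `Y`, that is
`Y^{1/2} (l (Y^{-1/2} X Y^{-1/2})^p + (1 - l))^{1/p} Y^{1/2}`. -/
noncomputable def powerMean (p l : ℝ) (X Y : A) : A :=
  perspective (fun x => (l * x ^ p + (1 - l)) ^ (1 / p)) Y X

lemma isStrictlyPositive_perspective_affine_rpow_rpow (hl : l ∈ Icc 0 1)
    (hX : IsStrictlyPositive X) (hY : IsStrictlyPositive Y) :
    IsStrictlyPositive (perspective (fun x => (l * x ^ p + (1 - l)) ^ θ) Y X) :=
  isStrictlyPositive_perspective hY hX (continuousOn_affine_rpow_rpow hl θ)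
    fun _ hx => Real.rpow_pos_of_pos (affine_rpow_pos hl hx) θ

lemma perspective_affine_rpow_rpow_one_add (hl : l ∈ Icc 0 1) (hX : IsStrictlyPositive X)
    (hY : IsStrictlyPositive Y) :
    perspective (fun x => (l * x ^ p + (1 - l)) ^ (1 + (1 - p) * θ)) Y X =
      l • geomMean (1 - p) X (perspective (fun x => (l * x ^ p + (1 - l)) ^ θ) Y X) +
      (1 - l) • geomMean (1 - p) Y (perspective (fun x => (l * x ^ p + (1 - l)) ^ θ) Y X) := by
  set u : ℝ → ℝ := fun x => l * x ^ p + (1 - l)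
  have hu0 (x : ℝ) (hx : 0 < x) : 0 < u x := affine_rpow_pos hl hx
  have huθ : ContinuousOn (fun x => u x ^ θ) (Ioi 0) := continuousOn_affine_rpow_rpow hl θ
  have huθ0 (x : ℝ) (hx : 0 < x) : 0 < u x ^ θ := Real.rpow_pos_of_pos (hu0 x hx) θ
  have cont_X : ContinuousOn (fun x => x * (u x ^ θ / x) ^ (1 - p)) (Ioi 0) :=
    (continuousOn_id' _).mul ((huθ.div (continuousOn_id' _) fun _ hx => hx.ne').rpow_const
      fun x hx => .inl (div_pos (huθ0 x hx) hx).ne')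
  have cont_Y : ContinuousOn (fun x => (u x ^ θ) ^ (1 - p)) (Ioi 0) :=
    huθ.rpow_const fun x hx => .inl (huθ0 x hx).ne'
  rw [geomMean_snd_perspective hY hX huθ huθ0, geomMean_fst_perspective hY hX huθ huθ0,
    ← perspective_const_mul hY hX cont_X, ← perspective_const_mul hY hX cont_Y,
    ← perspective_add hY hX (cont_X.const_mul l) (cont_Y.const_mul (1 - l))]
  refine perspective_congr hY hX fun x (hx : 0 < x) => ?_
  calc u x ^ (1 + (1 - p) * θ) = (l * x ^ p + (1 - l)) * (u x ^ θ) ^ (1 - p) := by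
        rw [Real.rpow_add (hu0 x hx), Real.rpow_one, mul_comm (1 - p), Real.rpow_mul (hu0 x hx).le]
    _ = l * (x * (u x ^ θ / x) ^ (1 - p)) + (1 - l) * (u x ^ θ) ^ (1 - p) := by
        rw [Real.div_rpow (huθ0 x hx).le hx.le, Real.rpow_sub hx 1 p, Real.rpow_one]
        field_simp

lemma concaveOn_perspective_affine_rpow_rpow_geom_sum (hp : p ∈ Icc 0 1) (hl : l ∈ Icc 0 1)
    (k : ℕ) :
    ConcaveOn ℝ ({X : A | IsStrictlyPositive X} ×ˢ {Y : A | IsStrictlyPositive Y})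
      (fun Q => perspective
        (fun x => (l * x ^ p + (1 - l)) ^ ∑ i ∈ Finset.range k, (1 - p) ^ i) Q.2 Q.1) := by
  have hconv := convex_setOf_isStrictlyPositive (A := A) |>.prod
    (convex_setOf_isStrictlyPositive (A := A))
  have hp' : 1 - p ∈ Icc 0 1 := Icc.one_sub_mem hp
  induction k with
  | zero =>
    refine ((LinearMap.snd ℝ A A).concaveOn hconv).congr fun Q hQ => ?_
    simp [perspective_one hQ.2 hQ.1]
  | succ k ih =>
    have hpos (Q : A × A) (hQ : Q ∈ {X : A | IsStrictlyPositive X} ×ˢ {Y | IsStrictlyPositive Y}) :=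
      isStrictlyPositive_perspective_affine_rpow_rpow (p := p)
        (θ := ∑ i ∈ Finset.range k, (1 - p) ^ i) hl hQ.1 hQ.2
    have step_X := concaveOn_geomMean_comp (F := LinearMap.fst ℝ A A) hp' (fun Q hQ => hQ.1) ih hpos
    have step_Y := concaveOn_geomMean_comp (F := LinearMap.snd ℝ A A) hp' (fun Q hQ => hQ.2) ih hpos
    refine ((step_X.smul hl.1).add (step_Y.smul (sub_nonneg.2 hl.2))).congr fun Q hQ => ?_
    rw [geom_sum_succ, add_comm _ (1 : ℝ), perspective_affine_rpow_rpow_one_add hl hQ.1 hQ.2]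
    rfl

lemma tendsto_geom_sum_one_sub (hp0 : 0 < p) (hp1 : p ≤ 1) :
    Tendsto (fun k => ∑ i ∈ Finset.range k, (1 - p) ^ i) atTop (𝓝 (1 / p)) := by
  simpa using (hasSum_geometric_of_lt_one (sub_nonneg.2 hp1) (sub_lt_self 1 hp0)).tendsto_sum_nat

lemma continuousOn_perspective_of_uncurry {T : Type*} [TopologicalSpace T] {F : T → ℝ → ℝ}
    {s : Set T} (hF : ContinuousOn F.uncurry (s ×ˢ Ioi 0)) (hX : IsStrictlyPositive X)
    (hY : IsStrictlyPositive Y) : ContinuousOn (fun τ => perspective (F τ) X Y) s := by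
  have hW := isStrictlyPositive_rpow_mul_mul_rpow hX hY (-(1 / 2))
  set W := X ^ (-(1 / 2) : ℝ) * Y * X ^ (-(1 / 2) : ℝ)
  have hF_spec : ContinuousOn F.uncurry (s ×ˢ spectrum ℝ W) :=
    hF.mono (prod_mono_right fun _ => hW.spectrum_pos)
  have hcfc : ContinuousOn (fun τ => cfc (F τ) W) s := fun τ hτ => by
    refine continuousWithinAt_cfc_fun (fun u hu => ?_) ?_
    · obtain ⟨v, hv, hvu⟩ := (ContinuousFunctionalCalculus.isCompact_spectrum W
        |>.mem_uniformity_of_prod hF_spec hτ (symm_le_uniformity hu))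
      filter_upwards [hv] with σ hσ x hx using hvu σ hσ x hx
    · filter_upwards [self_mem_nhdsWithin] with σ hσ using hF_spec.uncurry_left σ hσ
  exact (continuousOn_const.mul hcfc).mul continuousOn_const

lemma concaveOn_powerMean (hp0 : 0 < p) (hp1 : p ≤ 1) (hl : l ∈ Icc 0 1) :
    ConcaveOn ℝ ({X : A | IsStrictlyPositive X} ×ˢ {Y : A | IsStrictlyPositive Y})
      (fun Q => powerMean p l Q.1 Q.2) := by
  have hconv := convex_setOf_isStrictlyPositive (A := A) |>.prod
    (convex_setOf_isStrictlyPositive (A := A))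
  have hF : ContinuousOn (Function.uncurry fun θ x : ℝ => (l * x ^ p + (1 - l)) ^ θ)
      (univ ×ˢ Ioi 0) := by
    refine ContinuousOn.rpow ?_ continuousOn_fst fun z hz => .inl (affine_rpow_pos hl hz.2).ne'
    exact (((continuousOn_rpow_const_Ioi p).comp continuousOn_snd fun z hz => hz.2).const_mul
      l).add_const _
  have tendsto_powerMean (Q : A × A)
      (hQ : Q ∈ {X : A | IsStrictlyPositive X} ×ˢ {Y : A | IsStrictlyPositive Y}) :
      Tendsto (fun k => perspective
        (fun x => (l * x ^ p + (1 - l)) ^ ∑ i ∈ Finset.range k, (1 - p) ^ i) Q.2 Q.1) atTop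
        (𝓝 (powerMean p l Q.1 Q.2)) :=
    ((continuousOn_perspective_of_uncurry hF hQ.2 hQ.1).continuousAt univ_mem).tendsto.comp
      (tendsto_geom_sum_one_sub hp0 hp1)
  refine ⟨hconv, fun Q hQ R hR a b ha hb hab => ?_⟩
  exact le_of_tendsto_of_tendsto'
    (((tendsto_powerMean Q hQ).const_smul a).add ((tendsto_powerMean R hR).const_smul b))
    (tendsto_powerMean _ (hconv hQ hR ha hb hab))
    fun k => (concaveOn_perspective_affine_rpow_rpow_geom_sum ⟨hp0.le, hp1⟩ hl k).2 hQ hR ha hb hab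

lemma isStrictlyPositive_powerMean (hl : l ∈ Icc 0 1) (hX : IsStrictlyPositive X)
    (hY : IsStrictlyPositive Y) : IsStrictlyPositive (powerMean p l X Y) :=
  isStrictlyPositive_perspective_affine_rpow_rpow hl hX hY

lemma powerMean_eq_rpow (hl : l ∈ Icc 0 1) (hX : IsStrictlyPositive X)
    (hY : IsStrictlyPositive Y) :
    powerMean p l X Y = Y ^ (1 / 2 : ℝ) *
      (l • (Y ^ (-(1 / 2) : ℝ) * X * Y ^ (-(1 / 2) : ℝ)) ^ p + (1 - l) • 1) ^ (1 / p) *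
        Y ^ (1 / 2 : ℝ) := by
  have hW := isStrictlyPositive_rpow_mul_mul_rpow hY hX (-(1 / 2))
  have hrpow := (continuousOn_rpow_const_Ioi p).mono fun _ => hW.spectrum_pos
  rw [powerMean, perspective, CFC.rpow_eq_cfc_real hW.nonneg, ← cfc_const_mul l _ _ hrpow,
    ← Algebra.algebraMap_eq_smul_one, ← cfc_add_const _ _ _ (hrpow.const_mul l) hW.isSelfAdjoint,
    CFC.cfc_rpow (fun x hx => affine_rpow_pos hl (hW.spectrum_pos hx))
      ((hrpow.const_mul l).add_const _)]

lemma powerMean_congruence (hl : l ∈ Icc 0 1) (hX : IsStrictlyPositive X)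
    (hY : IsStrictlyPositive Y) {K : A} (hK : IsUnit K) :
    powerMean p l (star K * X * K) (star K * Y * K) = star K * powerMean p l X Y * K :=
  perspective_congruence hY hX (continuousOn_affine_rpow_rpow hl _) hK

lemma concaveOn_geomMean_powerMean (hp0 : 0 < p) (hp1 : p ≤ 1) (hl : l ∈ Icc 0 1) :
    ConcaveOn ℝ ({X : A | IsStrictlyPositive X} ×ˢ {Y : A | IsStrictlyPositive Y} ×ˢ
      {Z : A | IsStrictlyPositive Z})
      (fun Q => geomMean (1 - p) Q.2.2 (powerMean p l Q.1 Q.2.1)) := by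
  have hconv : Convex ℝ {X : A | IsStrictlyPositive X} := convex_setOf_isStrictlyPositive
  let fst_snd : A × A × A →ₗ[ℝ] A × A :=
    (LinearMap.fst ℝ A (A × A)).prod (LinearMap.fst ℝ A A ∘ₗ LinearMap.snd ℝ A (A × A))
  have hp' : 1 - p ∈ Icc 0 1 := ⟨sub_nonneg.2 hp1, sub_le_self 1 hp0.le⟩
  refine concaveOn_geomMean_comp (F := LinearMap.snd ℝ A A ∘ₗ LinearMap.snd ℝ A (A × A)) hp'
    (fun Q hQ => hQ.2.2) ?_ fun Q hQ => isStrictlyPositive_powerMean hl hQ.1 hQ.2.1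
  exact ((concaveOn_powerMean (A := A) hp0 hp1 hl).comp_linearMap fst_snd).subset
    (fun _ hQ => mk_mem_prod hQ.1 hQ.2.1) (hconv.prod (hconv.prod hconv))

lemma continuousOn_geomMean_powerMean {Z : A} (hX : IsStrictlyPositive X)
    (hY : IsStrictlyPositive Y) (hZ : IsStrictlyPositive Z) :
    ContinuousOn (fun l => geomMean (1 - p) Z (powerMean p l X Y)) (Icc 0 1) := by
  have hF : ContinuousOn (Function.uncurry fun l x : ℝ => (l * x ^ p + (1 - l)) ^ (1 / p))
      (Icc 0 1 ×ˢ Ioi 0) := by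
    refine ContinuousOn.rpow_const ?_ fun z hz => .inl (affine_rpow_pos hz.1 hz.2).ne'
    have hrpow := (continuousOn_rpow_const_Ioi p).comp
      (continuousOn_snd (s := Icc (0 : ℝ) 1 ×ˢ Ioi 0)) fun z hz => hz.2
    exact (continuousOn_fst.mul hrpow).add (continuousOn_const.sub continuousOn_fst)
  have hmean : ContinuousOn (fun l => powerMean p l X Y) (Icc 0 1) :=
    continuousOn_perspective_of_uncurry hF hY hX
  refine (continuousOn_const.mul ((CFC.continuousOn_rpow (1 - p)).comp
    ((continuousOn_const.mul hmean).mul continuousOn_const) fun l hl => ?_)).mul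
    continuousOn_const |>.congr fun l hl =>
      geomMean_eq_rpow hZ (isStrictlyPositive_powerMean hl hX hY)
  exact isStrictlyPositive_rpow_mul_mul_rpow hZ (isStrictlyPositive_powerMean hl hX hY) _

end PowerMean

section SmulOne

variable {a b p l t : ℝ}

lemma smul_one_rpow (ha : 0 < a) (q : ℝ) : (a • (1 : A)) ^ q = a ^ q • 1 := by
  rw [CFC.rpow_eq_cfc_real (isStrictlyPositive_one.smul ha).nonneg,
    ← Algebra.algebraMap_eq_smul_one, cfc_algebraMap, Algebra.algebraMap_eq_smul_one]

lemma perspective_smul_one (ha : 0 < a) (f : ℝ → ℝ) (b : ℝ) :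
    perspective f (a • (1 : A)) (b • 1) = (a * f (b / a)) • 1 := by
  have neg_half : a ^ (-(1 / 2) : ℝ) * b * a ^ (-(1 / 2) : ℝ) = b / a := by
    rw [mul_right_comm, ← Real.rpow_add ha, ← neg_add, add_halves, Real.rpow_neg_one,
      inv_mul_eq_div]
  have half : a ^ (1 / 2 : ℝ) * f (b / a) * a ^ (1 / 2 : ℝ) = a * f (b / a) := by
    rw [mul_right_comm, ← Real.rpow_add ha, add_halves, Real.rpow_one]
  simp only [perspective, smul_one_rpow ha, smul_mul_smul_comm, mul_one, neg_half]
  rw [← Algebra.algebraMap_eq_smul_one (b / a), cfc_algebraMap, Algebra.algebraMap_eq_smul_one,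
    smul_mul_smul_comm, smul_mul_smul_comm, mul_one, mul_one, half]

lemma geomMean_smul_one (ha : 0 < a) (hb : 0 < b) :
    geomMean t (a • (1 : A)) (b • 1) = (a ^ (1 - t) * b ^ t) • 1 := by
  rw [geomMean, perspective_smul_one ha, Real.div_rpow hb.le ha.le, Real.rpow_sub ha,
    Real.rpow_one]
  congr 1
  ring

lemma powerMean_smul_one (hp : p ≠ 0) (hl : l ∈ Icc 0 1) (ha : 0 < a) (hb : 0 < b) :
    powerMean p l (a • (1 : A)) (b • 1) = (l * a ^ p + (1 - l) * b ^ p) ^ (1 / p) • 1 := by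
  have hbp := Real.rpow_pos_of_pos hb p
  have hb_eq : b = (b ^ p) ^ (1 / p) := by
    rw [← Real.rpow_mul hb.le, mul_one_div_cancel hp, Real.rpow_one]
  rw [powerMean, perspective_smul_one hb]
  nth_rw 1 [hb_eq]
  rw [← Real.mul_rpow hbp.le (affine_rpow_pos hl (div_pos ha hb)).le, Real.div_rpow ha.le hb.le]
  congr 2
  field_simp

end SmulOne

end CStarAlgebra

section Matrix

open scoped MatrixOrder Matrix.Norms.L2Operator

-- `Pmap` integrates in the entrywise norm, whereas the C⋆-structure comes from the operator norm.
lemma integral_entrywise_eq_integral_l2Op {m n X : Type*} [Fintype m] [Fintype n] [DecidableEq n]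
    [MeasurableSpace X] (μ : Measure X) (f : X → Matrix m n ℂ) :
    @integral X _ Matrix.normedAddCommGroup Matrix.normedSpace _ μ f = ∫ x, f x ∂μ :=
  @ContinuousLinearEquiv.integral_comp_comm X (Matrix m n ℂ) (Matrix m n ℂ) _ μ ℝ _
    Matrix.instL2OpNormedAddCommGroup _ Matrix.normedAddCommGroup Matrix.normedSpace
    Matrix.normedSpace _ (.refl ℝ (Matrix m n ℂ)) f

variable {n : ℕ} {p l : ℝ} {A B C : Matrix (Fin n) (Fin n) ℂ}

lemma mpow_eq_rpow (hA : IsStrictlyPositive A) (q : ℝ) : mpow A q = A ^ q := by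
  rw [CFC.rpow_eq_cfc_real hA.nonneg, hA.isSelfAdjoint.isHermitian.cfc_eq, mpow,
    dif_pos hA.isSelfAdjoint.isHermitian]
  rfl

lemma powerMean_eq_mpow (hl : l ∈ Icc 0 1) (hA : IsStrictlyPositive A)
    (hB : IsStrictlyPositive B) :
    powerMean p l A B = mpow B (1 / 2) *
      mpow (l • mpow (mpow B (-(1 / 2)) * A * mpow B (-(1 / 2))) p + (1 - l) • 1) (1 / p) *
        mpow B (1 / 2) := by
  have hW := isStrictlyPositive_rpow_mul_mul_rpow hB hA (-(1 / 2))
  have affine_pos : IsStrictlyPositive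
      (l • (B ^ (-(1 / 2) : ℝ) * A * B ^ (-(1 / 2) : ℝ)) ^ p +
        (1 - l) • (1 : Matrix (Fin n) (Fin n) ℂ)) :=
    convex_setOf_isStrictlyPositive (IsStrictlyPositive.rpow _ p) isStrictlyPositive_one hl.1
      (sub_nonneg.2 hl.2) (add_sub_cancel l 1)
  rw [powerMean_eq_rpow hl hA hB, mpow_eq_rpow hB, mpow_eq_rpow hB, mpow_eq_rpow hW,
    mpow_eq_rpow affine_pos]

lemma mpow_powerMean_congruence (hl : l ∈ Icc 0 1) (hA : IsStrictlyPositive A)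
    (hB : IsStrictlyPositive B) (hC : IsStrictlyPositive C) :
    mpow (powerMean p l (C ^ (-(1 / 2) : ℝ) * A * C ^ (-(1 / 2) : ℝ))
        (C ^ (-(1 / 2) : ℝ) * B * C ^ (-(1 / 2) : ℝ))) (1 - p) =
      C ^ (-(1 / 2) : ℝ) * geomMean (1 - p) C (powerMean p l A B) * C ^ (-(1 / 2) : ℝ) := by
  have hM := isStrictlyPositive_powerMean (p := p) hl hA hB
  have hcongr := powerMean_congruence (p := p) hl hA hB
    (IsStrictlyPositive.rpow C (-(1 / 2))).isUnit
  have hcancel := rpow_mul_mul_rpow_cancel hC (-(1 / 2))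
    ((C ^ (-(1 / 2) : ℝ) * powerMean p l A B * C ^ (-(1 / 2) : ℝ)) ^ (1 - p))
  rw [neg_neg] at hcancel
  rw [(isSelfAdjoint_rpow C _).star_eq] at hcongr
  rw [hcongr, mpow_eq_rpow (isStrictlyPositive_rpow_mul_mul_rpow hC hM _),
    geomMean_eq_rpow hC hM, hcancel]

lemma integrableOn_geomMean_powerMean (hA : IsStrictlyPositive A) (hB : IsStrictlyPositive B)
    (hC : IsStrictlyPositive C) :
    IntegrableOn (fun l => geomMean (1 - p) C (powerMean p l A B)) (Icc (0 : ℝ) 1) :=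
  (continuousOn_geomMean_powerMean hA hB hC).integrableOn_compact isCompact_Icc

lemma Pmap_eq_integral (hA : IsStrictlyPositive A) (hB : IsStrictlyPositive B)
    (hC : IsStrictlyPositive C) :
    Pmap p A B C =
      (1 / p) • ∫ l in Icc (0 : ℝ) 1, geomMean (1 - p) C (powerMean p l A B) := by
  have hA' := isStrictlyPositive_rpow_mul_mul_rpow hC hA (-(1 / 2))
  have hB' := isStrictlyPositive_rpow_mul_mul_rpow hC hB (-(1 / 2))
  let conj : Matrix (Fin n) (Fin n) ℂ →L[ℝ] Matrix (Fin n) (Fin n) ℂ :=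
    (LinearMap.mulLeftRight ℝ (C ^ (-(1 / 2) : ℝ), C ^ (-(1 / 2) : ℝ))).toContinuousLinearMap
  rw [← rpow_mul_mul_rpow_cancel hC (1 / 2)
    (∫ l in Icc (0 : ℝ) 1, geomMean (1 - p) C (powerMean p l A B))]
  have conj_integral :
      ∫ l in Icc (0 : ℝ) 1, C ^ (-(1 / 2) : ℝ) * geomMean (1 - p) C (powerMean p l A B) *
          C ^ (-(1 / 2) : ℝ) =
        C ^ (-(1 / 2) : ℝ) * (∫ l in Icc (0 : ℝ) 1, geomMean (1 - p) C (powerMean p l A B)) *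
          C ^ (-(1 / 2) : ℝ) :=
    conj.integral_comp_comm (integrableOn_geomMean_powerMean hA hB hC)
  rw [Pmap, integral_entrywise_eq_integral_l2Op, mpow_eq_rpow hC, mpow_eq_rpow hC]
  congr 3
  refine (setIntegral_congr_fun measurableSet_Icc fun l hl => ?_).trans conj_integral
  rw [← powerMean_eq_mpow hl hA' hB', mpow_powerMean_congruence hl hA hB hC]

lemma concaveOn_Pmap (hp0 : 0 < p) (hp1 : p ≤ 1) : ConcaveOn ℝ
    ({X : Matrix (Fin n) (Fin n) ℂ | IsStrictlyPositive X} ×ˢ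
      {Y : Matrix (Fin n) (Fin n) ℂ | IsStrictlyPositive Y} ×ˢ
      {Z : Matrix (Fin n) (Fin n) ℂ | IsStrictlyPositive Z})
    (fun Q => Pmap p Q.1 Q.2.1 Q.2.2) := by
  have hconv : Convex ℝ {X : Matrix (Fin n) (Fin n) ℂ | IsStrictlyPositive X} :=
    convex_setOf_isStrictlyPositive
  have hint : ConcaveOn ℝ
      ({X : Matrix (Fin n) (Fin n) ℂ | IsStrictlyPositive X} ×ˢ
        {Y : Matrix (Fin n) (Fin n) ℂ | IsStrictlyPositive Y} ×ˢ
        {Z : Matrix (Fin n) (Fin n) ℂ | IsStrictlyPositive Z})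
      (fun Q => ∫ l in Icc (0 : ℝ) 1, geomMean (1 - p) Q.2.2 (powerMean p l Q.1 Q.2.1)) := by
    refine integral_concaveOn_of_integrand_ae (hconv.prod (hconv.prod hconv)) ?_ fun Q hQ =>
      integrableOn_geomMean_powerMean hQ.1 hQ.2.1 hQ.2.2
    filter_upwards [ae_restrict_mem measurableSet_Icc] with l hl
    exact concaveOn_geomMean_powerMean hp0 hp1 hl
  exact (hint.smul (one_div_nonneg.2 hp0.le)).congr fun Q hQ =>
    (Pmap_eq_integral hQ.1 hQ.2.1 hQ.2.2).symm

lemma posSemidef_Pmap_sub (hp0 : 0 < p) (hp1 : p ≤ 1)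
    {A₁ B₁ C₁ A₂ B₂ C₂ : Matrix (Fin n) (Fin n) ℂ} (hA₁ : A₁.PosDef) (hB₁ : B₁.PosDef)
    (hC₁ : C₁.PosDef) (hA₂ : A₂.PosDef) (hB₂ : B₂.PosDef) (hC₂ : C₂.PosDef) {α : ℝ}
    (hα0 : 0 ≤ α) (hα1 : α ≤ 1) :
    (Pmap p (α • A₁ + (1 - α) • A₂) (α • B₁ + (1 - α) • B₂) (α • C₁ + (1 - α) • C₂) -
      (α • Pmap p A₁ B₁ C₁ + (1 - α) • Pmap p A₂ B₂ C₂)).PosSemidef :=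
  Matrix.le_iff.1 <| (concaveOn_Pmap hp0 hp1).2
    (x := (A₁, B₁, C₁)) ⟨hA₁.isStrictlyPositive, hB₁.isStrictlyPositive, hC₁.isStrictlyPositive⟩
    (y := (A₂, B₂, C₂)) ⟨hA₂.isStrictlyPositive, hB₂.isStrictlyPositive, hC₂.isStrictlyPositive⟩
    hα0 (sub_nonneg.2 hα1) (add_sub_cancel α 1)

variable {t₁ t₂ t₃ : ℝ}

lemma Pmap_smul_one (hp : p ≠ 0) (ht₁ : 0 < t₁) (ht₂ : 0 < t₂) (ht₃ : 0 < t₃) :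
    Pmap p (t₁ • (1 : Matrix (Fin n) (Fin n) ℂ)) (t₂ • 1) (t₃ • 1) =
      ((1 / p) * (∫ l in (0 : ℝ)..1, (l * t₁ ^ p + (1 - l) * t₂ ^ p) ^ (1 / p - 1)) *
        t₃ ^ p) • 1 := by
  have integrand_eq : EqOn
      (fun l => geomMean (1 - p) (t₃ • 1)
        (powerMean p l (t₁ • (1 : Matrix (Fin n) (Fin n) ℂ)) (t₂ • 1)))
      (fun l => (t₃ ^ p * (l * t₁ ^ p + (1 - l) * t₂ ^ p) ^ (1 / p - 1)) • 1) (Icc 0 1) :=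
    fun l hl => by
      have base_pos : 0 < l * t₁ ^ p + (1 - l) * t₂ ^ p :=
        convex_Ioi (0 : ℝ) (Real.rpow_pos_of_pos ht₁ p) (Real.rpow_pos_of_pos ht₂ p) hl.1
          (sub_nonneg.2 hl.2) (add_sub_cancel l 1)
      dsimp only
      rw [powerMean_smul_one hp hl ht₁ ht₂,
        geomMean_smul_one ht₃ (Real.rpow_pos_of_pos base_pos _), ← Real.rpow_mul base_pos.le,
        sub_sub_cancel, mul_one_sub, one_div_mul_cancel hp]
  rw [Pmap_eq_integral (isStrictlyPositive_one.smul ht₁) (isStrictlyPositive_one.smul ht₂)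
    (isStrictlyPositive_one.smul ht₃), setIntegral_congr_fun measurableSet_Icc integrand_eq,
    integral_smul_const, integral_const_mul, integral_Icc_eq_integral_Ioc,
    ← intervalIntegral.integral_of_le zero_le_one, smul_smul, mul_comm (t₃ ^ p), ← mul_assoc]

lemma integral_affine_rpow_sub_one {θ u v : ℝ} (hθ : 0 < θ) (huv : u ≠ v) :
    ∫ l in (0 : ℝ)..1, (l * u + (1 - l) * v) ^ (θ - 1) = (u ^ θ - v ^ θ) / (θ * (u - v)) := by
  have affine_eq (l : ℝ) : l * u + (1 - l) * v = (u - v) * l + v := by ring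
  simp only [affine_eq]
  rw [intervalIntegral.integral_comp_mul_add (fun x => x ^ (θ - 1)) (sub_ne_zero.2 huv),
    integral_rpow (.inl (by linarith))]
  simp only [mul_zero, zero_add, mul_one, sub_add_cancel, smul_eq_mul]
  rw [inv_mul_eq_div, div_div]

lemma Pmap_smul_one_of_ne (hp : 0 < p) (ht₁ : 0 < t₁) (ht₂ : 0 < t₂) (ht₃ : 0 < t₃)
    (hne : t₁ ≠ t₂) :
    Pmap p (t₁ • (1 : Matrix (Fin n) (Fin n) ℂ)) (t₂ • 1) (t₃ • 1) =
      ((t₁ - t₂) / (t₁ ^ p - t₂ ^ p) * t₃ ^ p) • 1 := by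
  have hpow_ne : t₁ ^ p ≠ t₂ ^ p := fun h => hne ((Real.rpow_left_inj ht₁.le ht₂.le hp.ne').1 h)
  rw [Pmap_smul_one hp.ne' ht₁ ht₂ ht₃, integral_affine_rpow_sub_one (one_div_pos.2 hp) hpow_ne,
    ← Real.rpow_mul ht₁.le, ← Real.rpow_mul ht₂.le, mul_one_div_cancel hp.ne', Real.rpow_one,
    Real.rpow_one]
  congr 2
  have := sub_ne_zero.2 hpow_ne
  field_simp

lemma Pmap_smul_one_self (hp : p ≠ 0) (ht₁ : 0 < t₁) (ht₃ : 0 < t₃) :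
    Pmap p (t₁ • (1 : Matrix (Fin n) (Fin n) ℂ)) (t₁ • 1) (t₃ • 1) =
      ((1 / p) * t₁ ^ (1 - p) * t₃ ^ p) • 1 := by
  have integrand_eq (l : ℝ) : (l * t₁ ^ p + (1 - l) * t₁ ^ p) ^ (1 / p - 1) = t₁ ^ (1 - p) := by
    rw [← add_mul, add_sub_cancel, one_mul, ← Real.rpow_mul ht₁.le, mul_sub_one,
      mul_one_div_cancel hp]
  simp only [Pmap_smul_one hp ht₁ ht₁ ht₃, integrand_eq, intervalIntegral.integral_const,
    sub_zero, one_smul]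

end Matrix

end OperatorMean

theorem stmt18 (p : ℝ) (hp0 : 0 < p) (hp1 : p ≤ 1) :
    (∀ (n : ℕ) (A₁ B₁ C₁ A₂ B₂ C₂ : Matrix (Fin n) (Fin n) ℂ),
      A₁.PosDef → B₁.PosDef → C₁.PosDef → A₂.PosDef → B₂.PosDef → C₂.PosDef →
      ∀ α : ℝ, 0 ≤ α → α ≤ 1 →
      (Pmap p (α • A₁ + (1 - α) • A₂) (α • B₁ + (1 - α) • B₂)
          (α • C₁ + (1 - α) • C₂) -
        (α • Pmap p A₁ B₁ C₁ + (1 - α) • Pmap p A₂ B₂ C₂)).PosSemidef) ∧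
    (∀ t₁ t₂ t₃ : ℝ, 0 < t₁ → 0 < t₂ → 0 < t₃ → t₁ ≠ t₂ →
      Pmap p (t₁ • (1 : Matrix (Fin 1) (Fin 1) ℂ)) (t₂ • 1) (t₃ • 1) =
        ((t₁ - t₂) / (t₁ ^ p - t₂ ^ p) * t₃ ^ p) • 1) ∧
    (∀ t₁ t₃ : ℝ, 0 < t₁ → 0 < t₃ →
      Pmap p (t₁ • (1 : Matrix (Fin 1) (Fin 1) ℂ)) (t₁ • 1) (t₃ • 1) =
        ((1 / p) * t₁ ^ (1 - p) * t₃ ^ p) • 1) := by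
  refine ⟨?concave, ?ne, ?eq⟩
  case concave =>
    intro n A₁ B₁ C₁ A₂ B₂ C₂ hA₁ hB₁ hC₁ hA₂ hB₂ hC₂ α hα0 hα1
    exact OperatorMean.posSemidef_Pmap_sub hp0 hp1 hA₁ hB₁ hC₁ hA₂ hB₂ hC₂ hα0 hα1
  case ne =>
    intro t₁ t₂ t₃ h₁ h₂ h₃ hne
    exact OperatorMean.Pmap_smul_one_of_ne hp0 h₁ h₂ h₃ hne
  case eq =>
    intro t₁ t₃ h₁ h₃
    exact OperatorMean.Pmap_smul_one_self hp0.ne' h₁ h₃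
end
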